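/- Let $d \ge 1$, $m \in (0,\infty)\setminus\{1\}$, $0 < \alpha \le d$, $0 \le s < d/2$, and $\beta \ge 1$ with $d - 2s > \frac{\alpha}{\beta}$. Then there exist an $\alpha$-dimensional probability measure $\mu$ supported in the unit ball of $\mathbb{R}^d$, an orthonormal system $(f_j)_j$ in $\dot H^s(\mathbb{R}^d)$, and a sequence $(\lambda_j)_j \in \ell^\beta$ such that $\big\| \sum_j \lambda_j |e^{it(-\Delta)^{m/2}} f_j|^2 \big\|_{L_x^1(d\mu) L_t^\infty(0,1)} \lesssim \|\lambda\|_{\ell^\beta}$ fails. Equivalently, $d - 2s \le \frac{\alpha}{\beta}$ is necessary for the maximal estimate. -/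

import Mathlib

open MeasureTheory Set Complex
open scoped ENNReal NNReal RealInnerProductSpace

/-- The fractional Schrödinger evolution on the Fourier side:
`u(t,x) = ∫ e^{i(x·ξ + t|ξ|^m)} g(ξ) dξ`, where `g` is the Fourier transform of the data. -/
noncomputable def fracEvol (d : ℕ) (m : ℝ) (g : EuclideanSpace ℝ (Fin d) → ℂ)
    (t : ℝ) (x : EuclideanSpace ℝ (Fin d)) : ℂ :=
  ∫ ξ : EuclideanSpace ℝ (Fin d),
    Complex.exp (Complex.I * ((⟪x, ξ⟫ + t * ‖ξ‖ ^ m : ℝ) : ℂ)) * g ξ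

/-!
Normalise in `Ḣ^s` a wave packet whose Fourier transform is supported in a cube of side `2πN` at
distance about `N` from the origin, with the phase which makes it focus at the point `p` at time
`t₀`. At that time its intensity at `x` is `N^(d - 2s)` times a fixed function of `N (x - p)`,
bounded below near `0`. Two packets of the same frequency are orthogonal as soon as the vector
`N (p - p')` is nonzero and integral, because the exponential `ξ ↦ exp(-i ⟨p - p', ξ⟩)` then has
mean zero over the frequency cube; packets whose frequencies differ by a factor at least two have
disjoint supports.

A block consists of `n^d ≈ N^α` packets, focusing at the points of a lattice of spacing about
`N^(-α/d)`. The uniform measure on the union of the cubes of side about `1/N` at these points is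
`α`-dimensional, with a constant independent of `N`. With the common coefficient `M N^(-(d - 2s))`
the intensity of the block is about `M` on this set, whereas the `β`-th power sum of the
coefficients is `M^β N^(α - β(d - 2s))`, which tends to `0` as `N → ∞`. So `M` may be taken
arbitrarily large at no cost, and superposing infinitely many blocks, of rapidly increasing
frequencies, gives an infinite integral with coefficients in `ℓ^β`.

For the sum of the intensities to be finite almost everywhere, the blocks are placed in disjoint
cubes `[1/P, 2/P)^d` shrinking to the origin: by the `L²` decay of the focused packets, a block of
high frequency contributes little to the supports of the measures of the earlier ones.
-/

section CoordBox

variable {ι : Type*}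

/-- The Cartesian product of the sets `S i`, as a subset of Euclidean space. -/
def coordBox (S : ι → Set ℝ) : Set (EuclideanSpace ℝ ι) := {x | ∀ i, x i ∈ S i}

lemma toLp_preimage_coordBox (S : ι → Set ℝ) : WithLp.toLp 2 ⁻¹' coordBox S = univ.pi S := by
  ext x
  simp [coordBox]

lemma measurableSet_coordBox [Countable ι] {S : ι → Set ℝ} (hS : ∀ i, MeasurableSet (S i)) :
    MeasurableSet (coordBox S) := by
  have h : coordBox S = ⋂ i, (fun x : EuclideanSpace ℝ ι ↦ x i) ⁻¹' S i := by
    ext x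
    simp [coordBox]
  rw [h]
  exact .iInter fun i ↦ (by fun_prop : Measurable fun x : EuclideanSpace ℝ ι ↦ x i) (hS i)

variable [Fintype ι]

lemma volume_coordBox {S : ι → Set ℝ} (hS : ∀ i, MeasurableSet (S i)) :
    volume (coordBox S) = ∏ i, volume (S i) := by
  rw [← (PiLp.volume_preserving_toLp ι).measure_preimage
    (measurableSet_coordBox hS).nullMeasurableSet, toLp_preimage_coordBox, volume_pi_pi]

lemma norm_le_card_mul_of_forall_abs_le {x : EuclideanSpace ℝ ι} {a : ℝ} (ha : 0 ≤ a)
    (hx : ∀ i, |x i| ≤ a) : ‖x‖ ≤ Fintype.card ι * a := by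
  rw [EuclideanSpace.norm_eq, Real.sqrt_le_left (by positivity)]
  calc ∑ i, ‖x i‖ ^ 2 ≤ ∑ _i : ι, a ^ 2 :=
        Finset.sum_le_sum fun i _ ↦ pow_le_pow_left₀ (norm_nonneg _) (hx i) 2
    _ = (Fintype.card ι : ℝ) * a ^ 2 := by simp
    _ ≤ (Fintype.card ι : ℝ) ^ 2 * a ^ 2 := by
        gcongr
        exact_mod_cast Nat.le_self_pow two_ne_zero _
    _ = (Fintype.card ι * a) ^ 2 := by ring

end CoordBox

section Growth

variable {X : Type*} [PseudoMetricSpace X] [MeasurableSpace X]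

/-- The growth condition `μ (B(x, r)) ≤ A r ^ α` of an `α`-dimensional measure `μ`. -/
def HasGrowth (μ : Measure X) (α A : ℝ) : Prop :=
  ∀ (x : X) (r : ℝ), 0 < r → μ (Metric.ball x r) ≤ ENNReal.ofReal (A * r ^ α)

lemma hasGrowth_cond_coordBox {ι : Type*} [Fintype ι] {S : Set ℝ} (hS : MeasurableSet S)
    (hS0 : volume S ≠ 0) (hStop : volume S ≠ ∞) {B θ : ℝ} (hB : 0 ≤ B)
    (hgrowth : ∀ a r : ℝ, 0 < r →
      volume (S ∩ Icc (a - r) (a + r)) ≤ ENNReal.ofReal (B * r ^ θ) * volume S) :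
    HasGrowth (ProbabilityTheory.cond volume (coordBox fun _ : ι ↦ S))
      (Fintype.card ι * θ) (B ^ Fintype.card ι) := by
  intro x r hr
  have hsub : coordBox (fun _ ↦ S) ∩ Metric.ball x r ⊆
      coordBox fun i ↦ S ∩ Icc (x i - r) (x i + r) := fun y hy i ↦ by
    have hi : |y i - x i| ≤ r :=
      (PiLp.norm_apply_le (y - x) i).trans (mem_ball_iff_norm.1 hy.2).le
    exact ⟨hy.1 i, by linarith [abs_le.1 hi], by linarith [abs_le.1 hi]⟩
  have hnum : volume (coordBox (fun _ ↦ S) ∩ Metric.ball x r) ≤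
      (ENNReal.ofReal (B * r ^ θ) * volume S) ^ Fintype.card ι :=
    calc _ ≤ ∏ i : ι, volume (S ∩ Icc (x i - r) (x i + r)) :=
          (measure_mono hsub).trans_eq (volume_coordBox fun _ ↦ hS.inter measurableSet_Icc)
      _ ≤ ∏ _i : ι, ENNReal.ofReal (B * r ^ θ) * volume S :=
          Finset.prod_le_prod' fun i _ ↦ hgrowth (x i) r hr
      _ = _ := by simp
  rw [ProbabilityTheory.cond_apply (measurableSet_coordBox fun _ ↦ hS),
    volume_coordBox fun _ ↦ hS, Finset.prod_const, Finset.card_univ]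
  calc (volume S ^ Fintype.card ι)⁻¹ * volume (coordBox (fun _ ↦ S) ∩ Metric.ball x r)
      ≤ (volume S ^ Fintype.card ι)⁻¹ *
          (ENNReal.ofReal (B * r ^ θ) * volume S) ^ Fintype.card ι := by gcongr
    _ = ENNReal.ofReal (B * r ^ θ) ^ Fintype.card ι := by
        rw [mul_pow, mul_left_comm, ENNReal.inv_mul_cancel (pow_ne_zero _ hS0)
          (ENNReal.pow_ne_top hStop), mul_one]
    _ = ENNReal.ofReal (B ^ Fintype.card ι * r ^ (Fintype.card ι * θ)) := by
        rw [← ENNReal.ofReal_pow (by positivity), mul_pow, mul_comm (Fintype.card ι : ℝ),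
          Real.rpow_mul_natCast hr.le]

end Growth

section IntervalComb

/-- The union of the `n` intervals of length `ℓ` whose left endpoints are the points
`b, b + h, …, b + (n - 1) h`. -/
def intervalComb (n : ℕ) (b h ℓ : ℝ) : Set ℝ := ⋃ j : Fin n, Ico (b + j * h) (b + j * h + ℓ)

variable {n : ℕ} {b h ℓ : ℝ}

lemma measurableSet_intervalComb : MeasurableSet (intervalComb n b h ℓ) :=
  .iUnion fun _ ↦ measurableSet_Ico

lemma pairwise_disjoint_Ico_add_natCast_mul (hh : 0 ≤ h) (hℓ : ℓ ≤ h) :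
    Pairwise (Function.onFun Disjoint fun j : Fin n ↦ Ico (b + j * h) (b + j * h + ℓ)) := by
  rw [pairwise_disjoint_on]
  intro i j hij
  have hij' : (i + 1 : ℝ) ≤ j := by exact_mod_cast hij
  rw [Ico_disjoint_Ico]
  exact (min_le_left _ _).trans ((by nlinarith : _ ≤ b + j * h).trans (le_max_right _ _))

lemma volume_intervalComb (hh : 0 ≤ h) (hℓ : ℓ ≤ h) :
    volume (intervalComb n b h ℓ) = ENNReal.ofReal (n * ℓ) := by
  rw [intervalComb, measure_iUnion (pairwise_disjoint_Ico_add_natCast_mul hh hℓ)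
    fun _ ↦ measurableSet_Ico]
  simp [ENNReal.ofReal_mul]

lemma volume_intervalComb_ne_zero (hn : 0 < n) (hℓ0 : 0 < ℓ) (hℓ : ℓ ≤ h) :
    volume (intervalComb n b h ℓ) ≠ 0 := by
  rw [volume_intervalComb (hℓ0.le.trans hℓ) hℓ, ne_eq, ENNReal.ofReal_eq_zero, not_le]
  positivity

lemma volume_intervalComb_ne_top (hh : 0 ≤ h) (hℓ : ℓ ≤ h) :
    volume (intervalComb n b h ℓ) ≠ ∞ := by
  rw [volume_intervalComb hh hℓ]
  exact ENNReal.ofReal_ne_top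

lemma intervalComb_subset_Ico (hh : 0 ≤ h) (hℓ : ℓ ≤ h) :
    intervalComb n b h ℓ ⊆ Ico b (b + n * h) := by
  refine iUnion_subset fun j x hx ↦ ⟨le_trans (by nlinarith [j.val.cast_nonneg (α := ℝ)]) hx.1,
    hx.2.trans_le ?_⟩
  have hj : (j + 1 : ℝ) ≤ n := by exact_mod_cast j.2
  nlinarith

lemma card_mul_le_of_forall_Ico_inter_Icc_nonempty (hh : 0 ≤ h) (hℓ : ℓ ≤ h) {a r : ℝ}
    (hr : 0 ≤ r) {J : Finset (Fin n)}
    (hJ : ∀ j ∈ J, (Ico (b + j * h) (b + j * h + ℓ) ∩ Icc (a - r) (a + r)).Nonempty) :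
    J.card * h ≤ 2 * r + 2 * h := by
  have hsub : ⋃ j ∈ J, Ico (b + j * h) (b + j * h + h) ⊆ Icc (a - r - h) (a + r + h) := by
    refine iUnion₂_subset fun j hj x hx ↦ ?_
    obtain ⟨y, hy, hya⟩ := hJ j hj
    exact ⟨by linarith [hx.1, hy.2, hya.1], by linarith [hx.2, hy.1, hya.2]⟩
  have hvol := measure_mono (μ := volume) hsub
  rw [measure_biUnion_finset
    (fun i _ j _ hij ↦ pairwise_disjoint_Ico_add_natCast_mul hh le_rfl hij)
    fun _ _ ↦ measurableSet_Ico] at hvol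
  simp only [Real.volume_Ico, Real.volume_Icc, add_sub_cancel_left, Finset.sum_const,
    nsmul_eq_mul] at hvol
  rw [← ENNReal.ofReal_natCast, ← ENNReal.ofReal_mul (by positivity),
    ENNReal.ofReal_le_ofReal_iff (by linarith)] at hvol
  linarith

lemma volume_intervalComb_inter_Icc_le (hh : 0 < h) (hℓ : ℓ ≤ h) (a : ℝ) {r : ℝ} (hr : 0 ≤ r) :
    volume (intervalComb n b h ℓ ∩ Icc (a - r) (a + r)) ≤
      ENNReal.ofReal ((2 * r / h + 2) * min ℓ (2 * r)) := by
  classical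
  set T : Fin n → Set ℝ := fun j ↦ Ico (b + j * h) (b + j * h + ℓ) ∩ Icc (a - r) (a + r)
  set J : Finset (Fin n) := {j | (T j).Nonempty}
  have hcover : intervalComb n b h ℓ ∩ Icc (a - r) (a + r) ⊆ ⋃ j ∈ J, T j := by
    rintro x ⟨hx, hxa⟩
    obtain ⟨j, hj⟩ := mem_iUnion.1 hx
    have hxT : x ∈ T j := ⟨hj, hxa⟩
    exact mem_biUnion (by simpa [J] using ⟨x, hxT⟩) hxT
  have hT (j : Fin n) : volume (T j) ≤ ENNReal.ofReal (min ℓ (2 * r)) := by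
    rw [ENNReal.ofReal_min]
    refine le_min ((measure_mono inter_subset_left).trans ?_)
      ((measure_mono inter_subset_right).trans ?_)
    · simp
    · rw [Real.volume_Icc]
      exact ENNReal.ofReal_le_ofReal (by linarith)
  have hJ : (J.card : ℝ) ≤ 2 * r / h + 2 := by
    have := card_mul_le_of_forall_Ico_inter_Icc_nonempty hh.le hℓ hr
      (J := J) fun j hj ↦ (Finset.mem_filter.1 hj).2
    rw [← le_div_iff₀ hh] at this
    exact this.trans_eq (by field_simp)
  calc volume (intervalComb n b h ℓ ∩ Icc (a - r) (a + r))
      ≤ ∑ j ∈ J, volume (T j) := (measure_mono hcover).trans (measure_biUnion_finset_le J T)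
    _ ≤ J.card • ENNReal.ofReal (min ℓ (2 * r)) := Finset.sum_le_card_nsmul _ _ _ fun j _ ↦ hT j
    _ = ENNReal.ofReal J.card * ENNReal.ofReal (min ℓ (2 * r)) := by simp
    _ ≤ ENNReal.ofReal (2 * r / h + 2) * ENNReal.ofReal (min ℓ (2 * r)) := by gcongr
    _ = _ := (ENNReal.ofReal_mul (by positivity)).symm

lemma min_one_le_rpow {t θ : ℝ} (ht : 0 ≤ t) (hθ0 : 0 ≤ θ) (hθ1 : θ ≤ 1) : min 1 t ≤ t ^ θ := by
  rcases le_total t 1 with h | h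
  · exact (min_le_right _ _).trans (Real.self_le_rpow_of_le_one ht h hθ1)
  · exact (min_le_left _ _).trans (Real.one_le_rpow h hθ0)

lemma volume_intervalComb_inter_Icc_le_rpow (hh : 0 < h) (hℓ0 : 0 < ℓ) (hℓ : ℓ ≤ h) {B θ : ℝ}
    (hθ0 : 0 ≤ θ) (hθ1 : θ ≤ 1) (hB1 : 1 ≤ B) (hB : 2 / h + 2 * (2 / ℓ) ^ θ ≤ B * n)
    (a : ℝ) {r : ℝ} (hr : 0 < r) :
    volume (intervalComb n b h ℓ ∩ Icc (a - r) (a + r)) ≤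
      ENNReal.ofReal (B * r ^ θ) * volume (intervalComb n b h ℓ) := by
  rcases le_total 1 r with hr1 | hr1
  · have hone : 1 ≤ B * r ^ θ := one_le_mul_of_one_le_of_one_le hB1 (Real.one_le_rpow hr1 hθ0)
    exact (measure_mono inter_subset_left).trans (le_mul_of_one_le_left' (by simpa using hone))
  rw [volume_intervalComb hh.le hℓ, ← ENNReal.ofReal_mul (by positivity)]
  refine (volume_intervalComb_inter_Icc_le hh hℓ a hr.le).trans (ENNReal.ofReal_le_ofReal ?_)
  have hrθ : r ≤ r ^ θ := Real.self_le_rpow_of_le_one hr.le hr1 hθ1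
  have hmin : min ℓ (2 * r) ≤ ℓ * ((2 / ℓ) ^ θ * r ^ θ) := by
    rw [← Real.mul_rpow (by positivity) hr.le]
    calc min ℓ (2 * r) = ℓ * min 1 (2 / ℓ * r) := by
          rw [mul_min_of_nonneg _ _ hℓ0.le]
          congr 1 <;> field_simp
      _ ≤ ℓ * (2 / ℓ * r) ^ θ := by
          gcongr
          exact min_one_le_rpow (by positivity) hθ0 hθ1
  calc (2 * r / h + 2) * min ℓ (2 * r)
      = 2 / h * (r * min ℓ (2 * r)) + 2 * min ℓ (2 * r) := by ring
    _ ≤ 2 / h * (r ^ θ * ℓ) + 2 * (ℓ * ((2 / ℓ) ^ θ * r ^ θ)) := by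
        gcongr
        exact min_le_left _ _
    _ = (2 / h + 2 * (2 / ℓ) ^ θ) * (r ^ θ * ℓ) := by ring
    _ ≤ B * n * (r ^ θ * ℓ) := by gcongr
    _ = B * r ^ θ * (n * ℓ) := by ring

end IntervalComb

section Gluing

lemma tsum_ne_top_of_forall_lt_le {a b : ℕ → ℝ≥0∞} (i : ℕ) (ha : ∀ k, a k ≠ ∞)
    (hab : ∀ k, i < k → a k ≤ b k) (hb : ∑' k, b k ≠ ∞) : ∑' k, a k ≠ ∞ := by
  rw [← ENNReal.summable.sum_add_tsum_nat_add' (k := i + 1)]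
  have htail : ∑' k, a (k + (i + 1)) ≤ ∑' k, b k :=
    (ENNReal.tsum_le_tsum fun k ↦ hab _ (by omega)).trans
      (ENNReal.tsum_comp_le_tsum_of_injective (add_left_injective (i + 1)) b)
  exact ENNReal.add_ne_top.2 ⟨ENNReal.sum_ne_top.2 fun k _ ↦ ha k, ne_top_of_le_ne_top hb htail⟩

lemma tsum_ofReal_half_pow : ∑' k : ℕ, ENNReal.ofReal ((1 / 2) ^ k) = 2 := by
  rw [← ENNReal.ofReal_tsum_of_nonneg (fun k ↦ by positivity) summable_geometric_two,
    tsum_geometric_two, ENNReal.ofReal_ofNat]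

variable {X : Type*} [MeasurableSpace X]

/-- The superposition of the measures `ν k` with weights `2⁻ᵏ / A k`: if `ν k` satisfies the
growth condition with constant `A k`, the `k`-th summand satisfies it with constant `2⁻ᵏ`. -/
noncomputable def weightedSum (ν : ℕ → Measure X) (A : ℕ → ℝ) : Measure X :=
  Measure.sum fun k ↦ ENNReal.ofReal ((1 / 2) ^ k / A k) • ν k

variable {ν : ℕ → Measure X} {A : ℕ → ℝ}

lemma lintegral_weightedSum (f : X → ℝ≥0∞) :
    ∫⁻ x, f x ∂weightedSum ν A =
      ∑' k, ENNReal.ofReal ((1 / 2) ^ k / A k) * ∫⁻ x, f x ∂ν k := by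
  simp only [weightedSum, lintegral_sum_measure, lintegral_smul_measure, smul_eq_mul]

lemma ae_weightedSum {p : X → Prop} (hp : ∀ k, ∀ᵐ x ∂ν k, p x) :
    ∀ᵐ x ∂weightedSum ν A, p x :=
  Measure.ae_sum_iff.2 fun k ↦ Measure.ae_smul_measure (hp k) _

lemma isFiniteMeasure_weightedSum [∀ k, IsProbabilityMeasure (ν k)] (hA : ∀ k, 1 ≤ A k) :
    IsFiniteMeasure (weightedSum ν A) := by
  refine ⟨?_⟩
  rw [← lintegral_one, lintegral_weightedSum]
  calc ∑' k, ENNReal.ofReal ((1 / 2) ^ k / A k) * ∫⁻ _, 1 ∂ν k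
      ≤ ∑' k, ENNReal.ofReal ((1 / 2) ^ k) := by
        refine ENNReal.tsum_le_tsum fun k ↦ ?_
        rw [lintegral_one, measure_univ, mul_one]
        exact ENNReal.ofReal_le_ofReal (div_le_self (by positivity) (hA k))
    _ < ∞ := by
        rw [tsum_ofReal_half_pow]
        exact ENNReal.ofNat_lt_top

lemma lintegral_tsum_weightedSum_eq_top {ρ : ℕ → X → ℝ≥0∞} (hA : ∀ k, 0 < A k)
    (hlow : ∀ k, ENNReal.ofReal (2 ^ k * A k) ≤ ∫⁻ x, ρ k x ∂ν k) :
    ∫⁻ x, ∑' k, ρ k x ∂weightedSum ν A = ∞ := by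
  rw [lintegral_weightedSum, eq_top_iff,
    ← ENNReal.tsum_const_eq_top_of_ne_zero (α := ℕ) one_ne_zero]
  refine ENNReal.tsum_le_tsum fun k ↦ ?_
  have hAk := hA k
  calc (1 : ℝ≥0∞)
      = ENNReal.ofReal ((1 / 2) ^ k / A k) * ENNReal.ofReal (2 ^ k * A k) := by
        rw [← ENNReal.ofReal_mul (by positivity), ← ENNReal.ofReal_one]
        congr 1
        rw [one_div, inv_pow]
        field_simp
    _ ≤ ENNReal.ofReal ((1 / 2) ^ k / A k) * ∫⁻ x, ∑' l, ρ l x ∂ν k := by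
        gcongr
        exact (hlow k).trans (lintegral_mono fun x ↦ ENNReal.le_tsum k)

lemma hasGrowth_weightedSum [PseudoMetricSpace X] [OpensMeasurableSpace X] {α : ℝ}
    (hA : ∀ k, 0 < A k) (hν : ∀ k, HasGrowth (ν k) α (A k)) :
    HasGrowth (weightedSum ν A) α 2 := by
  intro x r hr
  rw [weightedSum, Measure.sum_apply _ Metric.isOpen_ball.measurableSet]
  calc ∑' k, (ENNReal.ofReal ((1 / 2) ^ k / A k) • ν k) (Metric.ball x r)
      ≤ ∑' k, ENNReal.ofReal ((1 / 2) ^ k) * ENNReal.ofReal (r ^ α) := by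
        refine ENNReal.tsum_le_tsum fun k ↦ ?_
        have hAk := hA k
        calc (ENNReal.ofReal ((1 / 2) ^ k / A k) • ν k) (Metric.ball x r)
            ≤ ENNReal.ofReal ((1 / 2) ^ k / A k) * ENNReal.ofReal (A k * r ^ α) := by
              rw [Measure.smul_apply, smul_eq_mul]
              gcongr
              exact hν k x r hr
          _ = ENNReal.ofReal ((1 / 2) ^ k) * ENNReal.ofReal (r ^ α) := by
              rw [← ENNReal.ofReal_mul (by positivity), ← ENNReal.ofReal_mul (by positivity)]
              congr 1
              field_simp
    _ = ENNReal.ofReal (2 * r ^ α) := by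
        rw [ENNReal.tsum_mul_right, tsum_ofReal_half_pow, ENNReal.ofReal_mul zero_le_two,
          ENNReal.ofReal_ofNat]

lemma HasGrowth.smul [PseudoMetricSpace X] {μ : Measure X} {α C : ℝ} (hμ : HasGrowth μ α C)
    {c : ℝ≥0∞} (hc : c ≠ ∞) : HasGrowth (c • μ) α (c.toReal * C) := fun x r hr ↦ by
  rw [Measure.smul_apply, smul_eq_mul, mul_assoc, ENNReal.ofReal_mul ENNReal.toReal_nonneg,
    ENNReal.ofReal_toReal hc]
  gcongr
  exact hμ x r hr

theorem exists_isProbabilityMeasure_hasGrowth_lintegral_tsum_eq_top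
    [PseudoMetricSpace X] [OpensMeasurableSpace X] [∀ k, IsProbabilityMeasure (ν k)] {α : ℝ}
    (hA : ∀ k, 1 ≤ A k) (hν : ∀ k, HasGrowth (ν k) α (A k)) {s : Set X} (hs : ∀ k, ν k sᶜ = 0)
    {ρ : ℕ → X → ℝ≥0∞} (hρ : ∀ k, Measurable (ρ k)) (hfin : ∀ i, ∑' k, ∫⁻ x, ρ k x ∂ν i ≠ ∞)
    (hlow : ∀ k, ENNReal.ofReal (2 ^ k * A k) ≤ ∫⁻ x, ρ k x ∂ν k) :
    ∃ μ : Measure X, IsProbabilityMeasure μ ∧ μ sᶜ = 0 ∧ (∃ C, 0 < C ∧ HasGrowth μ α C) ∧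
      (∀ᵐ x ∂μ, ∑' k, ρ k x < ∞) ∧ ∫⁻ x, ∑' k, ρ k x ∂μ = ∞ := by
  set σ := weightedSum ν A
  have hA0 (k : ℕ) : 0 < A k := one_pos.trans_le (hA k)
  have : IsFiniteMeasure σ := isFiniteMeasure_weightedSum hA
  have hσtop : ∫⁻ x, ∑' k, ρ k x ∂σ = ∞ := lintegral_tsum_weightedSum_eq_top hA0 hlow
  have hσ0 : σ ≠ 0 := fun h ↦ by simp [h] at hσtop
  have : NeZero σ := ⟨hσ0⟩
  have hinv0 : (σ univ)⁻¹ ≠ 0 := ENNReal.inv_ne_zero.2 (measure_ne_top σ univ)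
  have hinvtop : (σ univ)⁻¹ ≠ ∞ := ENNReal.inv_ne_top.2 (Measure.measure_univ_ne_zero.2 hσ0)
  refine ⟨(σ univ)⁻¹ • σ, inferInstance, ?_,
    ⟨_, mul_pos (ENNReal.toReal_pos hinv0 hinvtop) two_pos,
      (hasGrowth_weightedSum hA0 hν).smul hinvtop⟩, ?_, ?_⟩
  · exact Measure.ae_smul_measure (p := (· ∈ s)) (ae_weightedSum hs) _
  · refine Measure.ae_smul_measure (ae_weightedSum fun i ↦ ?_) _
    refine ae_lt_top (.tsum hρ) ?_
    rw [lintegral_tsum fun k ↦ (hρ k).aemeasurable]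
    exact hfin i
  · rw [lintegral_smul_measure, hσtop, smul_eq_mul, ENNReal.mul_top hinv0]

end Gluing

section Plancherel

open FourierTransform SchwartzMap

variable {V : Type*} [NormedAddCommGroup V] [InnerProductSpace ℝ V] [FiniteDimensional ℝ V]
  [MeasurableSpace V] [BorelSpace V]
  {F : Type*} [NormedAddCommGroup F] [InnerProductSpace ℂ F]

lemma continuous_fourier_of_integrable {f : V → F} (hf : Integrable f) : Continuous (𝓕 f) :=
  VectorFourier.fourierIntegral_continuous (L := innerₗ V) Real.continuous_fourierChar
    continuous_inner hf

variable [CompleteSpace F]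

lemma integral_fourier_smul_eq {φ : V → ℂ} {f : V → F} (hφ : Integrable φ) (hf : Integrable f) :
    ∫ ξ, 𝓕 φ ξ • f ξ = ∫ x, φ x • 𝓕 f x := by
  have h := VectorFourier.integral_fourierIntegral_smul_eq_flip (μ := volume) (ν := volume)
    (L := innerₗ V) Real.continuous_fourierChar continuous_inner hφ hf
  rwa [flip_innerₗ] at h

lemma fourier_toLp_ae_eq {f : V → F} (hf1 : Integrable f) (hf2 : MemLp f 2) :
    (𝓕 (hf2.toLp f) : Lp F 2 (volume : Measure V)) =ᵐ[volume] 𝓕 f := by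
  refine ae_eq_of_integral_contDiff_smul_eq ((Lp.memLp _).locallyIntegrable one_le_two)
    (continuous_fourier_of_integrable hf1).locallyIntegrable fun g hg hgc ↦ ?_
  set φ : 𝓢(V, ℂ) := (hgc.comp_left Complex.ofReal_zero).toSchwartzMap
    (Complex.ofRealCLM.contDiff.comp hg)
  have hφ (x : V) (v : F) : φ x • v = g x • v := Complex.coe_smul _ _
  have hweak : ∫ x, (𝓕 φ) x • (hf2.toLp f : V → F) x =
      ∫ x, φ x • (𝓕 (hf2.toLp f) : Lp F 2 (volume : Measure V)) x := by
    simpa only [TemperedDistribution.fourier_apply, Lp.toTemperedDistribution_apply]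
      using congrArg (· φ) (Lp.fourier_toTemperedDistribution_eq (hf2.toLp f))
  have hflip : ∫ x, (𝓕 φ) x • (hf2.toLp f : V → F) x = ∫ x, φ x • 𝓕 f x := by
    rw [← integral_fourier_smul_eq φ.integrable hf1, ← SchwartzMap.fourier_coe]
    refine integral_congr_ae ?_
    filter_upwards [hf2.coeFn_toLp] with x hx
    rw [hx]
  simpa only [hφ] using hweak.symm.trans hflip

theorem memLp_two_fourier {f : V → F} (hf1 : Integrable f) (hf2 : MemLp f 2) : MemLp (𝓕 f) 2 :=
  (memLp_congr_ae (fourier_toLp_ae_eq hf1 hf2)).1 (Lp.memLp _)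

end Plancherel

section Scaling

open Filter Topology

variable {V : Type*} [NormedAddCommGroup V] [NormedSpace ℝ V] [FiniteDimensional ℝ V]
  [MeasurableSpace V] [BorelSpace V]

lemma tendsto_setLIntegral_norm_gt (μ : Measure V) {f : V → ℝ≥0∞}
    (hf : ∫⁻ y, f y ∂μ ≠ ∞) :
    Tendsto (fun R : ℝ ↦ ∫⁻ y in {y | R < ‖y‖}, f y ∂μ) atTop (𝓝 0) := by
  have : IsFiniteMeasure (μ.withDensity f) := isFiniteMeasure_withDensity hf
  have : ProperSpace V := FiniteDimensional.proper ℝ V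
  have h := tendsto_measure_norm_gt_of_isTightMeasureSet
    (isTightMeasureSet_singleton (μ := μ.withDensity f))
  simp only [mem_singleton_iff, iSup_iSup_eq_left] at h
  exact h.congr fun R ↦ withDensity_apply _ (measurableSet_lt measurable_const measurable_norm)

variable (μ : Measure V) [μ.IsAddHaarMeasure]

lemma lintegral_comp_smul_sub_left {f : V → ℝ≥0∞} (hf : Measurable f) {N : ℝ} (hN : 0 < N)
    (p : V) :
    ∫⁻ x, f (N • (p - x)) ∂μ =
      ENNReal.ofReal (N ^ Module.finrank ℝ V)⁻¹ * ∫⁻ y, f y ∂μ := by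
  rw [lintegral_sub_left_eq_self (fun x ↦ f (N • x)) p,
    ← lintegral_map hf (measurable_const_smul N), Measure.map_addHaar_smul μ hN.ne',
    lintegral_smul_measure, abs_of_pos (by positivity), smul_eq_mul]

lemma setLIntegral_comp_smul_sub_left {f : V → ℝ≥0∞} (hf : Measurable f) {N : ℝ} (hN : 0 < N)
    (δ : ℝ) (p : V) :
    ∫⁻ x in {x | δ < ‖p - x‖}, f (N • (p - x)) ∂μ =
      ENNReal.ofReal (N ^ Module.finrank ℝ V)⁻¹ * ∫⁻ y in {y | N * δ < ‖y‖}, f y ∂μ := by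
  have hfar : MeasurableSet {y : V | N * δ < ‖y‖} :=
    measurableSet_lt measurable_const measurable_norm
  rw [← lintegral_indicator hfar, ← lintegral_comp_smul_sub_left μ (hf.indicator hfar) hN p,
    ← lintegral_indicator (measurableSet_lt measurable_const (by fun_prop))]
  congr 1 with x
  simp only [indicator_apply, mem_ofPred_eq, norm_smul, Real.norm_of_nonneg hN.le,
    mul_lt_mul_iff_right₀ hN]

end Scaling

section Kernel

open FourierTransform

variable {ι : Type*} [Fintype ι]

/-- The profile of the wave packets on the Fourier side: the multiplier `‖ξ‖ ^ (-s)` restricted to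
the cube `[1, 2)^ι`. -/
noncomputable def profile (ι : Type*) [Fintype ι] (s : ℝ) : EuclideanSpace ℝ ι → ℂ :=
  (coordBox fun _ ↦ Ico 1 2).indicator fun ξ ↦ ((‖ξ‖ ^ (-s) : ℝ) : ℂ)

lemma volume_coordBox_Ico_one_two : volume (coordBox fun _ : ι ↦ Ico (1 : ℝ) 2) = 1 := by
  rw [volume_coordBox fun _ ↦ measurableSet_Ico]
  norm_num

variable [Nonempty ι]

lemma le_norm_of_mem_coordBox_Ico {a b : ℝ} {ξ : EuclideanSpace ℝ ι}
    (hξ : ξ ∈ coordBox fun _ ↦ Ico a b) : a ≤ ‖ξ‖ :=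
  let i := Classical.arbitrary ι
  (hξ i).1.trans ((le_abs_self _).trans (PiLp.norm_apply_le ξ i))

lemma rpow_norm_le_of_mem_coordBox_Ico_one_two (s : ℝ) {ξ : EuclideanSpace ℝ ι}
    (hξ : ξ ∈ coordBox fun _ ↦ Ico (1 : ℝ) 2) : ‖ξ‖ ^ s ≤ (Fintype.card ι * 2 : ℝ) ^ |s| := by
  have hle : ‖ξ‖ ≤ Fintype.card ι * 2 := norm_le_card_mul_of_forall_abs_le zero_le_two fun i ↦
    abs_le.2 ⟨by linarith [(hξ i).1], (hξ i).2.le⟩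
  calc ‖ξ‖ ^ s ≤ ‖ξ‖ ^ |s| :=
        Real.rpow_le_rpow_of_exponent_le (le_norm_of_mem_coordBox_Ico hξ) (le_abs_self s)
    _ ≤ _ := Real.rpow_le_rpow (norm_nonneg _) hle (abs_nonneg s)

lemma memLp_profile (s : ℝ) (p : ℝ≥0∞) : MemLp (profile ι s) p := by
  have hbox := measurableSet_coordBox fun _ : ι ↦ measurableSet_Ico (a := (1 : ℝ)) (b := 2)
  rw [profile, memLp_indicator_iff_restrict hbox]
  have : IsFiniteMeasure (volume.restrict (coordBox fun _ : ι ↦ Ico (1 : ℝ) 2)) := ⟨by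
    rw [Measure.restrict_apply_univ, volume_coordBox_Ico_one_two]
    exact ENNReal.one_lt_top⟩
  have hmeas : Measurable fun ξ : EuclideanSpace ℝ ι ↦ ((‖ξ‖ ^ (-s) : ℝ) : ℂ) := by fun_prop
  refine MemLp.of_bound hmeas.aestronglyMeasurable ((Fintype.card ι * 2 : ℝ) ^ |-s|)
    (ae_restrict_of_forall_mem hbox fun ξ hξ ↦ ?_)
  rw [Complex.norm_real, Real.norm_of_nonneg (by positivity)]
  exact rpow_norm_le_of_mem_coordBox_Ico_one_two (-s) hξ

lemma continuous_fourier_profile (s : ℝ) : Continuous (𝓕 (profile ι s)) :=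
  continuous_fourier_of_integrable (memLp_one_iff_integrable.1 (memLp_profile s 1))

lemma lintegral_enorm_sq_fourier_profile_ne_top (s : ℝ) :
    ∫⁻ y, ‖𝓕 (profile ι s) y‖ₑ ^ 2 ≠ ∞ := by
  have hL2 := memLp_two_fourier (memLp_one_iff_integrable.1 (memLp_profile (ι := ι) s 1))
    (memLp_profile s 2)
  simpa using (lintegral_rpow_enorm_lt_top_of_eLpNorm_lt_top two_ne_zero (by simp) hL2.2).ne

lemma fourier_profile_zero_ne_zero (s : ℝ) : 𝓕 (profile ι s) 0 ≠ 0 := by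
  have hbox := measurableSet_coordBox fun _ : ι ↦ measurableSet_Ico (a := (1 : ℝ)) (b := 2)
  have hint : IntegrableOn (fun ξ : EuclideanSpace ℝ ι ↦ ‖ξ‖ ^ (-s)) (coordBox fun _ ↦ Ico 1 2) :=
    ((integrable_indicator_iff hbox).1 (memLp_one_iff_integrable.1 (memLp_profile s 1))).re
  have hzero : 𝓕 (profile ι s) 0 = ((∫ ξ in coordBox fun _ : ι ↦ Ico 1 2, ‖ξ‖ ^ (-s) : ℝ) : ℂ) := by
    rw [Real.fourier_eq, ← integral_complex_ofReal, ← integral_indicator hbox]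
    simp [profile]
  rw [hzero, Complex.ofReal_ne_zero]
  refine ((setIntegral_pos_iff_support_of_nonneg_ae
    (.of_forall fun ξ ↦ by positivity) hint).2 ?_).ne'
  have hsupp : coordBox (fun _ : ι ↦ Ico 1 2) ⊆ Function.support fun ξ ↦ ‖ξ‖ ^ (-s) :=
    fun ξ hξ ↦ (Real.rpow_pos_of_pos (one_pos.trans_le (le_norm_of_mem_coordBox_Ico hξ)) _).ne'
  rw [inter_eq_right.2 hsupp, volume_coordBox_Ico_one_two]
  exact one_pos

lemma exists_le_enorm_sq_fourier_profile (s : ℝ) :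
    ∃ δ > 0, ∃ c > 0, ∀ y : EuclideanSpace ℝ ι, ‖y‖ ≤ δ →
      ENNReal.ofReal c ≤ ‖𝓕 (profile ι s) y‖ₑ ^ 2 := by
  have h0 : 0 < ‖𝓕 (profile ι s) 0‖ ^ 2 :=
    pow_pos (norm_pos_iff.2 (fourier_profile_zero_ne_zero s)) 2
  have hnear : ∀ᶠ y in nhds (0 : EuclideanSpace ℝ ι),
      ‖𝓕 (profile ι s) 0‖ ^ 2 / 2 < ‖𝓕 (profile ι s) y‖ ^ 2 :=
    ((continuous_fourier_profile s).norm.pow 2).continuousAt.eventually_const_lt (half_lt_self h0)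
  obtain ⟨δ, hδ, hball⟩ := Metric.nhds_basis_closedBall.eventually_iff.1 hnear
  refine ⟨δ, hδ, _, half_pos h0, fun y hy ↦ ?_⟩
  rw [← ofReal_norm, ← ENNReal.ofReal_pow (norm_nonneg _)]
  exact ENNReal.ofReal_le_ofReal (hball (mem_closedBall_zero_iff.2 hy)).le

end Kernel

section Orthogonality

variable {ι : Type*} [Fintype ι]

lemma setIntegral_coordBox_prod (S : ι → Set ℝ) (f : ι → ℝ → ℂ) :
    ∫ x in coordBox S, ∏ i, f i (x i) = ∏ i, ∫ t in S i, f i t := by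
  rw [← (PiLp.volume_preserving_toLp ι).setIntegral_preimage_emb
      (MeasurableEquiv.toLp 2 (ι → ℝ)).measurableEmbedding _ (coordBox S),
    toLp_preimage_coordBox, volume_pi, Measure.restrict_pi_pi]
  exact integral_fintype_prod_eq_prod f

lemma setIntegral_Ico_exp_eq_zero {a b v : ℝ} (hab : a ≤ b) (hv : v ≠ 0)
    (hz : ∃ z : ℤ, (b - a) * v = 2 * Real.pi * z) :
    ∫ t in Ico a b, Complex.exp (-Complex.I * v * t) = 0 := by
  obtain ⟨z, hz⟩ := hz
  have hperiod : Complex.exp (-Complex.I * v * b) = Complex.exp (-Complex.I * v * a) := by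
    refine Complex.exp_eq_exp_iff_exists_int.2 ⟨-z, ?_⟩
    have hz' : ((b : ℂ) - a) * v = 2 * Real.pi * z := by exact_mod_cast hz
    push_cast
    linear_combination -Complex.I * hz'
  rw [integral_Ico_eq_integral_Ioc, ← intervalIntegral.integral_of_le hab,
    integral_exp_mul_complex (by simpa using hv), hperiod, sub_self, zero_div]

lemma setIntegral_coordBox_exp_inner_eq_zero {a b : ℝ} (hab : a ≤ b) {v : EuclideanSpace ℝ ι}
    (hv : v ≠ 0) (hz : ∀ i, ∃ z : ℤ, (b - a) * v i = 2 * Real.pi * z) :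
    ∫ ξ in coordBox fun _ ↦ Ico a b, Complex.exp (-Complex.I * (⟪v, ξ⟫ : ℝ)) = 0 := by
  have hprod (ξ : EuclideanSpace ℝ ι) : Complex.exp (-Complex.I * (⟪v, ξ⟫ : ℝ)) =
      ∏ i, Complex.exp (-Complex.I * v i * ξ i) := by
    rw [← Complex.exp_sum, PiLp.inner_apply]
    push_cast
    rw [Finset.mul_sum]
    congr 2 with i
    simp
    ring
  obtain ⟨i, hi⟩ : ∃ i, v i ≠ 0 := by
    by_contra! h
    exact hv (by ext i; simpa using h i)
  simp only [hprod]
  rw [setIntegral_coordBox_prod (fun _ ↦ Ico a b) fun i t ↦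
    Complex.exp (-Complex.I * v i * t)]
  exact Finset.prod_eq_zero (Finset.mem_univ i) (setIntegral_Ico_exp_eq_zero hab hi (hz i))

end Orthogonality

section WavePacket

variable {ι : Type*}

/-- The cube of side `2πN` which supports the wave packets of frequency `N`. -/
def freqCube (ι : Type*) (N : ℝ) : Set (EuclideanSpace ℝ ι) :=
  coordBox fun _ ↦ Ico (2 * Real.pi * N) (2 * (2 * Real.pi * N))

lemma smul_mem_freqCube_iff {N : ℝ} (hN : 0 < N) {η : EuclideanSpace ℝ ι} :
    (2 * Real.pi * N) • η ∈ freqCube ι N ↔ η ∈ coordBox fun _ ↦ Ico (1 : ℝ) 2 := by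
  have hR : 0 < 2 * Real.pi * N := mul_pos Real.two_pi_pos hN
  simp only [freqCube, coordBox, mem_ofPred_eq, PiLp.smul_apply, smul_eq_mul, mem_Ico,
    mul_comm (2 : ℝ) (2 * Real.pi * N), mul_lt_mul_iff_right₀ hR, le_mul_iff_one_le_right hR]

lemma disjoint_freqCube [Nonempty ι] {N N' : ℝ} (h : 2 * N ≤ N') :
    Disjoint (freqCube ι N) (freqCube ι N') := by
  refine Set.disjoint_left.2 fun ξ hξ hξ' ↦ ?_
  let i := Classical.arbitrary ι
  have h1 := (hξ i).2
  have h2 := (hξ' i).1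
  nlinarith [Real.pi_pos]

lemma measurableSet_freqCube [Countable ι] {N : ℝ} : MeasurableSet (freqCube ι N) :=
  measurableSet_coordBox fun _ ↦ measurableSet_Ico

variable [Fintype ι]

/-- The `Ḣ^s` inner product of two functions, expressed through their Fourier transforms. -/
noncomputable def sobolevInner (s : ℝ) (f g : EuclideanSpace ℝ ι → ℂ) : ℂ :=
  ∫ ξ, ((‖ξ‖ ^ (2 * s) : ℝ) : ℂ) * (f ξ * starRingEnd ℂ (g ξ))

/-- The Fourier transform of the `Ḣ^s`-normalised wave packet of frequency `N`. Its phase is chosen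
so that the fractional Schrödinger evolution focuses it at the point `p` at time `t₀`. -/
noncomputable def wavePacket (m s t₀ N : ℝ) (p : EuclideanSpace ℝ ι) : EuclideanSpace ℝ ι → ℂ :=
  (freqCube ι N).indicator fun ξ ↦
    (((√((2 * Real.pi * N) ^ Fintype.card ι))⁻¹ * ‖ξ‖ ^ (-s) : ℝ) : ℂ) *
      Complex.exp (-Complex.I * ((⟪p, ξ⟫ + t₀ * ‖ξ‖ ^ m : ℝ) : ℂ))

lemma volume_freqCube {N : ℝ} :
    volume (freqCube ι N) = ENNReal.ofReal (2 * Real.pi * N) ^ Fintype.card ι := by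
  rw [freqCube, volume_coordBox fun _ ↦ measurableSet_Ico]
  simp [two_mul (2 * Real.pi * N)]

variable [Nonempty ι]

lemma norm_pos_of_mem_freqCube {N : ℝ} (hN : 0 < N) {ξ : EuclideanSpace ℝ ι}
    (hξ : ξ ∈ freqCube ι N) : 0 < ‖ξ‖ :=
  (mul_pos Real.two_pi_pos hN).trans_le (le_norm_of_mem_coordBox_Ico hξ)

lemma weight_mul_wavePacket_mul_conj (m s t₀ : ℝ) {N : ℝ} (hN : 0 < N)
    (p p' ξ : EuclideanSpace ℝ ι) :
    ((‖ξ‖ ^ (2 * s) : ℝ) : ℂ) *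
        (wavePacket m s t₀ N p ξ * starRingEnd ℂ (wavePacket m s t₀ N p' ξ)) =
      (((2 * Real.pi * N) ^ Fintype.card ι)⁻¹ : ℝ) *
        (freqCube ι N).indicator (fun ξ ↦ Complex.exp (-Complex.I * (⟪p - p', ξ⟫ : ℝ))) ξ := by
  by_cases hξ : ξ ∈ freqCube ι N
  swap
  · simp [wavePacket, indicator_of_notMem hξ]
  simp only [wavePacket, indicator_of_mem hξ, map_mul, Complex.conj_ofReal]
  set κ := √((2 * Real.pi * N) ^ Fintype.card ι)
  have hphase : Complex.exp (-Complex.I * ((⟪p, ξ⟫ + t₀ * ‖ξ‖ ^ m : ℝ) : ℂ)) *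
      starRingEnd ℂ (Complex.exp (-Complex.I * ((⟪p', ξ⟫ + t₀ * ‖ξ‖ ^ m : ℝ) : ℂ))) =
      Complex.exp (-Complex.I * (⟪p - p', ξ⟫ : ℝ)) := by
    rw [← Complex.exp_conj, ← Complex.exp_add, inner_sub_left]
    simp only [map_mul, map_neg, Complex.conj_I, Complex.conj_ofReal]
    push_cast
    ring_nf
  have hweight : ‖ξ‖ ^ (2 * s) * (‖ξ‖ ^ (-s) * ‖ξ‖ ^ (-s)) = 1 := by
    have hpos := norm_pos_of_mem_freqCube hN hξ
    rw [← Real.rpow_add hpos, ← Real.rpow_add hpos, show 2 * s + (-s + -s) = 0 by ring,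
      Real.rpow_zero]
  have hamplitude : ‖ξ‖ ^ (2 * s) * ((κ⁻¹ * ‖ξ‖ ^ (-s)) * (κ⁻¹ * ‖ξ‖ ^ (-s))) =
      ((2 * Real.pi * N) ^ Fintype.card ι)⁻¹ := by
    have hκ : κ * κ = (2 * Real.pi * N) ^ Fintype.card ι :=
      Real.mul_self_sqrt (pow_nonneg (mul_pos Real.two_pi_pos hN).le _)
    rw [← hκ, mul_inv]
    linear_combination κ⁻¹ * κ⁻¹ * hweight
  rw [← hphase, ← hamplitude]
  push_cast
  ring

lemma sobolevInner_wavePacket (m s t₀ : ℝ) {N : ℝ} (hN : 0 < N) (p p' : EuclideanSpace ℝ ι) :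
    sobolevInner s (wavePacket m s t₀ N p) (wavePacket m s t₀ N p') =
      (((2 * Real.pi * N) ^ Fintype.card ι)⁻¹ : ℝ) *
        ∫ ξ in freqCube ι N, Complex.exp (-Complex.I * (⟪p - p', ξ⟫ : ℝ)) := by
  simp only [sobolevInner, weight_mul_wavePacket_mul_conj m s t₀ hN]
  rw [integral_const_mul, integral_indicator measurableSet_freqCube]

lemma sobolevInner_wavePacket_self (m s t₀ : ℝ) {N : ℝ} (hN : 0 < N) (p : EuclideanSpace ℝ ι) :
    sobolevInner s (wavePacket m s t₀ N p) (wavePacket m s t₀ N p) = 1 := by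
  have hR : 0 < 2 * Real.pi * N := mul_pos Real.two_pi_pos hN
  rw [sobolevInner_wavePacket m s t₀ hN]
  simp only [sub_self, inner_zero_left, Complex.ofReal_zero, mul_zero, Complex.exp_zero]
  rw [setIntegral_const, measureReal_def, volume_freqCube, ENNReal.toReal_pow,
    ENNReal.toReal_ofReal hR.le, Complex.real_smul, mul_one, ← Complex.ofReal_mul,
    inv_mul_cancel₀ (pow_ne_zero _ hR.ne'), Complex.ofReal_one]

lemma sobolevInner_wavePacket_eq_zero (m s t₀ : ℝ) {N : ℝ} (hN : 0 < N)
    {p p' : EuclideanSpace ℝ ι} (hne : p ≠ p') (hz : ∀ i, ∃ z : ℤ, N * (p i - p' i) = z) :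
    sobolevInner s (wavePacket m s t₀ N p) (wavePacket m s t₀ N p') = 0 := by
  have hR : 0 < 2 * Real.pi * N := mul_pos Real.two_pi_pos hN
  rw [sobolevInner_wavePacket m s t₀ hN, freqCube,
    setIntegral_coordBox_exp_inner_eq_zero (by linarith) (sub_ne_zero.2 hne), mul_zero]
  intro i
  obtain ⟨z, hz⟩ := hz i
  exact ⟨z, by rw [← hz, PiLp.sub_apply]; ring⟩

lemma sobolevInner_wavePacket_eq_zero_of_two_mul_le (m s t₀ : ℝ) {N N' : ℝ}
    (h : 2 * N ≤ N' ∨ 2 * N' ≤ N) (p p' : EuclideanSpace ℝ ι) :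
    sobolevInner s (wavePacket m s t₀ N p) (wavePacket m s t₀ N' p') = 0 := by
  have hdisj : Disjoint (freqCube ι N) (freqCube ι N') :=
    h.elim disjoint_freqCube fun h ↦ (disjoint_freqCube h).symm
  refine integral_eq_zero_of_ae (.of_forall fun ξ ↦ ?_)
  by_cases hξ : ξ ∈ freqCube ι N
  · simp [wavePacket, indicator_of_notMem (Set.disjoint_left.1 hdisj hξ)]
  · simp [wavePacket, indicator_of_notMem hξ]

end WavePacket

section Evolution

open FourierTransform

variable {d : ℕ}

lemma exp_mul_wavePacket_smul (m s t₀ : ℝ) {N : ℝ} (hN : 0 < N)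
    (p x η : EuclideanSpace ℝ (Fin d)) :
    Complex.exp (Complex.I * ((⟪x, (2 * Real.pi * N) • η⟫ +
        t₀ * ‖(2 * Real.pi * N) • η‖ ^ m : ℝ) : ℂ)) *
        wavePacket m s t₀ N p ((2 * Real.pi * N) • η) =
      (((√((2 * Real.pi * N) ^ d))⁻¹ * (2 * Real.pi * N) ^ (-s) : ℝ) : ℂ) *
        (Complex.exp (↑(-2 * Real.pi * ⟪η, N • (p - x)⟫) * Complex.I) •
          profile (Fin d) s η) := by
  have hR : 0 < 2 * Real.pi * N := mul_pos Real.two_pi_pos hN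
  by_cases hη : η ∈ coordBox fun _ ↦ Ico (1 : ℝ) 2
  swap
  · simp [wavePacket, profile, indicator_of_notMem hη,
      indicator_of_notMem (mt (smul_mem_freqCube_iff hN).1 hη)]
  simp only [wavePacket, profile, indicator_of_mem hη,
    indicator_of_mem ((smul_mem_freqCube_iff hN).2 hη), Fintype.card_fin, smul_eq_mul]
  set ω := t₀ * ‖(2 * Real.pi * N) • η‖ ^ m
  have hphase : Complex.exp (Complex.I * ((⟪x, (2 * Real.pi * N) • η⟫ + ω : ℝ) : ℂ)) *
      Complex.exp (-Complex.I * ((⟪p, (2 * Real.pi * N) • η⟫ + ω : ℝ) : ℂ)) =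
      Complex.exp (↑(-2 * Real.pi * ⟪η, N • (p - x)⟫) * Complex.I) := by
    rw [← Complex.exp_add]
    congr 1
    simp only [inner_smul_right, inner_sub_right, real_inner_comm η]
    push_cast
    ring
  rw [← hphase, norm_smul, Real.norm_of_nonneg hR.le, Real.mul_rpow hR.le (norm_nonneg _)]
  push_cast
  ring

lemma fracEvol_wavePacket (m s t₀ : ℝ) {N : ℝ} (hN : 0 < N) (p x : EuclideanSpace ℝ (Fin d)) :
    fracEvol d m (wavePacket m s t₀ N p) t₀ x =
      ((2 * Real.pi * N) ^ d * ((√((2 * Real.pi * N) ^ d))⁻¹ * (2 * Real.pi * N) ^ (-s)) : ℝ) *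
        𝓕 (profile (Fin d) s) (N • (p - x)) := by
  have : 0 < 2 * Real.pi * N := mul_pos Real.two_pi_pos hN
  have hsubst := Measure.integral_comp_smul (volume : Measure (EuclideanSpace ℝ (Fin d)))
    (fun ξ ↦ Complex.exp (Complex.I * ((⟪x, ξ⟫ + t₀ * ‖ξ‖ ^ m : ℝ) : ℂ)) *
      wavePacket m s t₀ N p ξ) (2 * Real.pi * N)
  simp only [exp_mul_wavePacket_smul m s t₀ hN] at hsubst
  rw [integral_const_mul, ← Real.fourier_eq', finrank_euclideanSpace, Fintype.card_fin,
    abs_of_pos (by positivity), eq_inv_smul_iff₀ (by positivity)] at hsubst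
  rw [fracEvol, ← hsubst, Complex.real_smul, ← mul_assoc, ← Complex.ofReal_mul]

lemma norm_sq_fracEvol_wavePacket (m s t₀ : ℝ) {N : ℝ} (hN : 0 < N)
    (p x : EuclideanSpace ℝ (Fin d)) :
    ‖fracEvol d m (wavePacket m s t₀ N p) t₀ x‖ ^ 2 =
      (2 * Real.pi * N) ^ (d - 2 * s) * ‖𝓕 (profile (Fin d) s) (N • (p - x))‖ ^ 2 := by
  have hR : 0 < 2 * Real.pi * N := mul_pos Real.two_pi_pos hN
  rw [fracEvol_wavePacket m s t₀ hN, norm_mul, Complex.norm_real, mul_pow, Real.norm_eq_abs, sq_abs]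
  generalize 2 * Real.pi * N = R at hR
  congr 1
  have hpow : R ^ ((d : ℝ) - 2 * s) = R ^ d * (R ^ (-s)) ^ 2 := by
    rw [← Real.rpow_mul_natCast hR.le, ← Real.rpow_natCast R d, ← Real.rpow_add hR]
    congr 1
    push_cast
    ring
  rw [hpow, mul_pow, mul_pow, inv_pow, Real.sq_sqrt (by positivity)]
  field_simp

end Evolution

section BlockFreq

/-- A multiple of `n * P` comparable with `n ^ (1 / θ)`, up to a constant depending on `P`: the
frequency of a block of `n ^ d` wave packets, which are then spaced by about `N ^ (-θ)`. -/
noncomputable def blockFreq (θ : ℝ) (P n : ℕ) : ℕ := n * P * ⌈(n : ℝ) ^ (1 / θ - 1)⌉₊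

variable {θ : ℝ} {P n : ℕ}

lemma mul_le_blockFreq (hn : 0 < n) : n * P ≤ blockFreq θ P n :=
  Nat.le_mul_of_pos_right _ (Nat.ceil_pos.2 (by positivity))

lemma blockFreq_pos (hP : 0 < P) (hn : 0 < n) : 0 < blockFreq θ P n :=
  (Nat.mul_pos hn hP).trans_le (mul_le_blockFreq hn)

lemma rpow_one_div_eq_mul_rpow (hn : 0 < n) : (n : ℝ) ^ (1 / θ) = n * (n : ℝ) ^ (1 / θ - 1) := by
  rw [Real.rpow_sub_one (by positivity)]
  field_simp

lemma natCast_le_rpow_blockFreq (hθ : 0 < θ) (hP : 0 < P) (hn : 0 < n) :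
    (n : ℝ) ≤ (blockFreq θ P n : ℝ) ^ θ := by
  have hP1 : (1 : ℝ) ≤ P := by exact_mod_cast hP
  rw [← Real.rpow_inv_le_iff_of_pos (by positivity) (by positivity) hθ, ← one_div,
    rpow_one_div_eq_mul_rpow hn]
  calc (n : ℝ) * (n : ℝ) ^ (1 / θ - 1) ≤ n * P * ⌈(n : ℝ) ^ (1 / θ - 1)⌉₊ := by
        gcongr
        · exact le_mul_of_one_le_right (by positivity) hP1
        · exact Nat.le_ceil _
    _ = blockFreq θ P n := by simp [blockFreq]

lemma rpow_blockFreq_le (hθ0 : 0 < θ) (hθ1 : θ ≤ 1) (hP : 0 < P) (hn : 0 < n) :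
    (blockFreq θ P n : ℝ) ^ θ ≤ 2 * P * n := by
  have hn1 : (1 : ℝ) ≤ n := by exact_mod_cast hn
  have hP1 : (1 : ℝ) ≤ 2 * P := by exact_mod_cast (by omega : 1 ≤ 2 * P)
  have hceil : (⌈(n : ℝ) ^ (1 / θ - 1)⌉₊ : ℝ) ≤ 2 * (n : ℝ) ^ (1 / θ - 1) := by
    have := Real.one_le_rpow hn1 (sub_nonneg.2 (one_le_one_div hθ0 hθ1))
    linarith [Nat.ceil_lt_add_one (zero_le_one.trans this)]
  calc (blockFreq θ P n : ℝ) ^ θ ≤ (2 * P * (n : ℝ) ^ (1 / θ)) ^ θ := by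
        gcongr
        rw [rpow_one_div_eq_mul_rpow hn, blockFreq]
        push_cast
        nlinarith [mul_le_mul_of_nonneg_left hceil (by positivity : (0 : ℝ) ≤ n * P)]
    _ = (2 * P : ℝ) ^ θ * n := by
        rw [Real.mul_rpow (by positivity) (by positivity), ← Real.rpow_mul (by positivity),
          one_div_mul_cancel hθ0.ne', Real.rpow_one]
    _ ≤ 2 * P * n := by
        gcongr
        exact Real.rpow_le_self_of_one_le hP1 hθ1

lemma mul_blockFreq_le_blockFreq (hθ0 : 0 < θ) (hθ1 : θ ≤ 1) {a P' n' : ℕ} (hP : a * P ≤ P')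
    (hn : n ≤ n') : a * blockFreq θ P n ≤ blockFreq θ P' n' := by
  have hexp : 0 ≤ 1 / θ - 1 := sub_nonneg.2 (one_le_one_div hθ0 hθ1)
  calc a * blockFreq θ P n = n * (a * P) * ⌈(n : ℝ) ^ (1 / θ - 1)⌉₊ := by
        rw [blockFreq]
        ring
    _ ≤ blockFreq θ P' n' := by
        unfold blockFreq
        gcongr

end BlockFreq

section BlockSet

variable {ι : Type*}

/-- The lattice points `1 / P + j i / (n * P)`, for `0 ≤ j i < n`, of the cube `[1 / P, 2 / P)^ι`:
the points at which the wave packets of a block focus. -/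
noncomputable def blockCenter (P n : ℕ) (j : ι → Fin n) : EuclideanSpace ℝ ι :=
  WithLp.toLp 2 fun i ↦ 1 / P + j i * (1 / (n * P))

/-- The union of the cubes of side `c / N` attached to the points `blockCenter P n j`, where `N` is
the frequency `blockFreq θ P n`. -/
def blockSet (ι : Type*) (θ c : ℝ) (P n : ℕ) : Set (EuclideanSpace ℝ ι) :=
  coordBox fun _ ↦ intervalComb n (1 / P) (1 / (n * P)) (c / blockFreq θ P n)

variable {θ c : ℝ} {P n : ℕ}

lemma blockCenter_injective (hP : 0 < P) : Function.Injective (blockCenter (ι := ι) P n) := by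
  intro j j' h
  ext i
  have hn : (0 : ℝ) < n := by exact_mod_cast (j i).pos
  have hi := congrArg (fun x : EuclideanSpace ℝ ι ↦ x i) h
  simp only [blockCenter, add_right_inj] at hi
  exact_mod_cast mul_right_cancel₀ (by positivity) hi

lemma exists_int_blockFreq_mul_blockCenter_sub (hP : 0 < P) (j j' : ι → Fin n) (i : ι) :
    ∃ z : ℤ, (blockFreq θ P n : ℝ) * (blockCenter P n j i - blockCenter P n j' i) = z := by
  have hn : (0 : ℝ) < n := by exact_mod_cast (j i).pos
  refine ⟨⌈(n : ℝ) ^ (1 / θ - 1)⌉₊ * ((j i : ℤ) - j' i), ?_⟩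
  simp only [blockCenter, blockFreq]
  push_cast
  field_simp
  ring

lemma blockCenter_apply_lt (hP : 0 < P) (j : ι → Fin n) (i : ι) :
    blockCenter P n j i < 2 / P := by
  have hn : (0 : ℝ) < n := by exact_mod_cast (j i).pos
  have hj : (j i : ℝ) < n := by exact_mod_cast (j i).2
  calc blockCenter P n j i = 1 / P + j i * (1 / (n * P)) := rfl
    _ < 1 / P + n * (1 / (n * P)) := by gcongr
    _ = 2 / P := by field_simp; norm_num

lemma div_blockFreq_le (hc1 : c ≤ 1) (hP : 0 < P) (hn : 0 < n) :
    c / blockFreq θ P n ≤ 1 / (n * P) := by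
  have hN : ((n * P : ℕ) : ℝ) ≤ blockFreq θ P n := Nat.cast_le.2 (mul_le_blockFreq hn)
  push_cast at hN
  gcongr

lemma apply_mem_Ico_of_mem_blockSet (hc1 : c ≤ 1) (hP : 0 < P) (hn : 0 < n)
    {x : EuclideanSpace ℝ ι} (hx : x ∈ blockSet ι θ c P n) (i : ι) :
    x i ∈ Ico (1 / P : ℝ) (2 / P) := by
  have h := intervalComb_subset_Ico (by positivity) (div_blockFreq_le hc1 hP hn) (hx i)
  refine ⟨h.1, h.2.trans_eq ?_⟩
  field_simp
  norm_num

lemma measurableSet_blockSet [Countable ι] : MeasurableSet (blockSet ι θ c P n) :=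
  measurableSet_coordBox fun _ ↦ measurableSet_intervalComb

variable [Fintype ι]

lemma norm_le_one_of_mem_blockSet (hc1 : c ≤ 1) (hP : 0 < P) (hιP : 2 * Fintype.card ι ≤ P)
    (hn : 0 < n) {x : EuclideanSpace ℝ ι} (hx : x ∈ blockSet ι θ c P n) : ‖x‖ ≤ 1 := by
  have hιP' : (Fintype.card ι * 2 : ℝ) ≤ P := by exact_mod_cast (mul_comm 2 _).symm.trans_le hιP
  have hcoord (i : ι) : |x i| ≤ 2 / P := by
    have h := apply_mem_Ico_of_mem_blockSet hc1 hP hn hx i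
    rw [abs_of_nonneg (le_trans (by positivity) h.1)]
    exact h.2.le
  calc ‖x‖ ≤ Fintype.card ι * (2 / P) := norm_le_card_mul_of_forall_abs_le (by positivity) hcoord
    _ = Fintype.card ι * 2 / P := by ring
    _ ≤ 1 := div_le_one_of_le₀ hιP' (by positivity)

lemma exists_norm_smul_blockCenter_sub_le (hc0 : 0 ≤ c) (hP : 0 < P) (hn : 0 < n)
    {x : EuclideanSpace ℝ ι} (hx : x ∈ blockSet ι θ c P n) :
    ∃ j : ι → Fin n, ‖(blockFreq θ P n : ℝ) • (blockCenter P n j - x)‖ ≤ Fintype.card ι * c := by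
  have hN : (0 : ℝ) < blockFreq θ P n := by exact_mod_cast blockFreq_pos hP hn
  choose j hj using fun i ↦ mem_iUnion.1 (hx i)
  refine ⟨j, norm_le_card_mul_of_forall_abs_le hc0 fun i ↦ ?_⟩
  have hxi : x i ∈ Ico (blockCenter P n j i) (blockCenter P n j i + c / blockFreq θ P n) := hj i
  have hle : |blockCenter P n j i - x i| ≤ c / blockFreq θ P n :=
    abs_le.2 ⟨by linarith [hxi.2], by linarith [hxi.1, div_nonneg hc0 hN.le]⟩
  rw [PiLp.smul_apply, PiLp.sub_apply, smul_eq_mul, abs_mul, abs_of_pos hN]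
  exact (mul_le_mul_of_nonneg_left hle hN.le).trans_eq (mul_div_cancel₀ c hN.ne')

lemma lt_norm_blockCenter_sub_of_mem_blockSet [Nonempty ι] (hc1 : c ≤ 1) (hP : 0 < P)
    (hn : 0 < n) {P' n' : ℕ} (hPP' : 4 * P ≤ P') {x : EuclideanSpace ℝ ι}
    (hx : x ∈ blockSet ι θ c P n) (j : ι → Fin n') : 2 / P' < ‖blockCenter P' n' j - x‖ := by
  let i := Classical.arbitrary ι
  have hPP'' : (4 * P : ℝ) ≤ P' := by exact_mod_cast hPP'
  have hinv : 4 / (P' : ℝ) ≤ 1 / P := by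
    rw [div_le_div_iff₀ (by linarith [(Nat.cast_pos (α := ℝ)).2 hP]) (by positivity)]
    linarith
  have hxi : 1 / (P : ℝ) ≤ x i := (apply_mem_Ico_of_mem_blockSet hc1 hP hn hx i).1
  have hpi := blockCenter_apply_lt (by omega : 0 < P') j i
  calc 2 / (P' : ℝ) = 4 / P' - 2 / P' := by ring
    _ < x i - blockCenter P' n' j i := by linarith
    _ ≤ |blockCenter P' n' j i - x i| := (le_abs_self _).trans_eq (abs_sub_comm _ _)
    _ ≤ ‖blockCenter P' n' j - x‖ := PiLp.norm_apply_le (blockCenter P' n' j - x) i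

lemma div_blockFreq_pos (hc0 : 0 < c) (hP : 0 < P) (hn : 0 < n) : 0 < c / blockFreq θ P n :=
  div_pos hc0 (by exact_mod_cast blockFreq_pos hP hn)

lemma volume_blockSet_ne_zero (hc0 : 0 < c) (hc1 : c ≤ 1) (hP : 0 < P) (hn : 0 < n) :
    volume (blockSet ι θ c P n) ≠ 0 := by
  rw [blockSet, volume_coordBox fun _ ↦ measurableSet_intervalComb]
  exact Finset.prod_ne_zero_iff.2 fun _ _ ↦ volume_intervalComb_ne_zero hn
    (div_blockFreq_pos hc0 hP hn) (div_blockFreq_le hc1 hP hn)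

lemma volume_blockSet_ne_top (hc1 : c ≤ 1) (hP : 0 < P) (hn : 0 < n) :
    volume (blockSet ι θ c P n) ≠ ∞ := by
  rw [blockSet, volume_coordBox fun _ ↦ measurableSet_intervalComb]
  exact ENNReal.prod_ne_top fun _ _ ↦
    volume_intervalComb_ne_top (by positivity) (div_blockFreq_le hc1 hP hn)

lemma hasGrowth_cond_blockSet (hθ0 : 0 < θ) (hθ1 : θ ≤ 1) (hc0 : 0 < c) (hc1 : c ≤ 1) (hP : 0 < P)
    (hn : 0 < n) :
    HasGrowth (ProbabilityTheory.cond volume (blockSet ι θ c P n)) (Fintype.card ι * θ)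
      ((10 * P / c) ^ Fintype.card ι) := by
  have hN := rpow_blockFreq_le hθ0 hθ1 hP hn
  have hℓ := div_blockFreq_le (θ := θ) hc1 hP hn
  have hℓ0 := div_blockFreq_pos (θ := θ) hc0 hP hn
  have hh : (0 : ℝ) < 1 / (n * P) := by positivity
  have hPc : (P : ℝ) ≤ P / c := le_div_self (by positivity) hc0 hc1
  have hP1 : (1 : ℝ) ≤ P := by exact_mod_cast hP
  have hpow : (2 / (c / blockFreq θ P n)) ^ θ ≤ 2 / c * (2 * P * n) := by
    rw [show 2 / (c / (blockFreq θ P n : ℝ)) = 2 / c * blockFreq θ P n by field_simp,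
      Real.mul_rpow (by positivity) (by positivity)]
    gcongr
    exact Real.rpow_le_self_of_one_le ((one_le_div hc0).2 (by linarith)) hθ1
  refine hasGrowth_cond_coordBox measurableSet_intervalComb
    (volume_intervalComb_ne_zero hn hℓ0 hℓ) (volume_intervalComb_ne_top hh.le hℓ) (by positivity)
    fun a r hr ↦ volume_intervalComb_inter_Icc_le_rpow hh hℓ0 hℓ hθ0.le hθ1 ?_ ?_ a hr
  · rw [mul_div_assoc]
    linarith
  · calc 2 / (1 / (n * P : ℝ)) + 2 * (2 / (c / blockFreq θ P n)) ^ θ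
        ≤ 2 * (P * n) + 2 * (2 / c * (2 * P * n)) := by
          rw [div_div_eq_mul_div, div_one, mul_comm (n : ℝ)]
          gcongr
      _ ≤ 2 * (P / c * n) + 2 * (2 / c * (2 * P * n)) := by gcongr
      _ = 10 * P / c * n := by ring

end BlockSet

section BlockDensity

open FourierTransform

variable {ι : Type*} [Fintype ι] {s θ c : ℝ} {P n : ℕ}

/-- The `L²` mass of the Fourier transform of `profile ι s` outside the ball of radius `R`. -/
noncomputable def profileTail (ι : Type*) [Fintype ι] (s R : ℝ) : ℝ≥0∞ :=
  ∫⁻ y in {y : EuclideanSpace ℝ ι | R < ‖y‖}, ‖𝓕 (profile ι s) y‖ₑ ^ 2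

/-- The total intensity at the point `x` of the wave packets of a block at their focusing time,
normalised so that each of them has size about one at its centre. -/
noncomputable def blockDensity (s θ : ℝ) (P n : ℕ) (x : EuclideanSpace ℝ ι) : ℝ≥0∞ :=
  ∑' j : ι → Fin n, ‖𝓕 (profile ι s) ((blockFreq θ P n : ℝ) • (blockCenter P n j - x))‖ₑ ^ 2

lemma ofReal_le_blockDensity_of_mem_blockSet {b : ℝ} (hb : ∀ y : EuclideanSpace ℝ ι,
      ‖y‖ ≤ Fintype.card ι * c → ENNReal.ofReal b ≤ ‖𝓕 (profile ι s) y‖ₑ ^ 2)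
    (hc0 : 0 ≤ c) (hP : 0 < P) (hn : 0 < n) {x : EuclideanSpace ℝ ι}
    (hx : x ∈ blockSet ι θ c P n) : ENNReal.ofReal b ≤ blockDensity s θ P n x := by
  obtain ⟨j, hj⟩ := exists_norm_smul_blockCenter_sub_le hc0 hP hn hx
  exact (hb _ hj).trans (ENNReal.le_tsum j)

variable [Nonempty ι]

lemma measurable_enorm_sq_fourier_profile :
    Measurable fun y ↦ ‖𝓕 (profile ι s) y‖ₑ ^ 2 :=
  (continuous_fourier_profile s).measurable.enorm.pow_const 2

lemma measurable_enorm_sq_fourier_profile_smul_sub (N : ℝ) (p : EuclideanSpace ℝ ι) :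
    Measurable fun x ↦ ‖𝓕 (profile ι s) (N • (p - x))‖ₑ ^ 2 :=
  measurable_enorm_sq_fourier_profile.comp (by fun_prop)

lemma measurable_blockDensity : Measurable (blockDensity (ι := ι) s θ P n) :=
  .tsum fun _ ↦ measurable_enorm_sq_fourier_profile_smul_sub _ _

lemma lintegral_blockDensity_ne_top (hP : 0 < P) (hn : 0 < n) :
    ∫⁻ x, blockDensity (ι := ι) s θ P n x ≠ ∞ := by
  have hN : (0 : ℝ) < blockFreq θ P n := by exact_mod_cast blockFreq_pos hP hn
  have hpacket (j : ι → Fin n) := lintegral_comp_smul_sub_left volume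
    (measurable_enorm_sq_fourier_profile (ι := ι) (s := s)) hN (blockCenter P n j)
  simp only [blockDensity]
  rw [lintegral_tsum fun _ ↦ (measurable_enorm_sq_fourier_profile_smul_sub _ _).aemeasurable]
  simp only [hpacket, ENNReal.tsum_const]
  exact ENNReal.mul_ne_top (by simp)
    (ENNReal.mul_ne_top ENNReal.ofReal_ne_top (lintegral_enorm_sq_fourier_profile_ne_top s))

lemma setLIntegral_blockDensity_le (hP : 0 < P) (hn : 0 < n) {δ : ℝ} {E : Set (EuclideanSpace ℝ ι)}
    (hE : ∀ x ∈ E, ∀ j, δ < ‖blockCenter P n j - x‖) :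
    ∫⁻ x in E, blockDensity s θ P n x ≤ profileTail ι s (blockFreq θ P n * δ) := by
  have hN : (0 : ℝ) < blockFreq θ P n := by exact_mod_cast blockFreq_pos hP hn
  have hnN : (n : ℝ) ≤ blockFreq θ P n :=
    Nat.cast_le.2 ((Nat.le_mul_of_pos_right n hP).trans (mul_le_blockFreq hn))
  have hpacket (j : ι → Fin n) :
      ∫⁻ x in E, ‖𝓕 (profile ι s) ((blockFreq θ P n : ℝ) • (blockCenter P n j - x))‖ₑ ^ 2 ≤
        ENNReal.ofReal ((blockFreq θ P n : ℝ) ^ Fintype.card ι)⁻¹ *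
          profileTail ι s (blockFreq θ P n * δ) := by
    have h := setLIntegral_comp_smul_sub_left volume
      (measurable_enorm_sq_fourier_profile (ι := ι) (s := s)) hN δ (blockCenter P n j)
    rw [finrank_euclideanSpace] at h
    exact (lintegral_mono_set fun x hx ↦ hE x hx j).trans_eq h
  have hcount : (n : ℝ≥0∞) ^ Fintype.card ι *
      ENNReal.ofReal ((blockFreq θ P n : ℝ) ^ Fintype.card ι)⁻¹ ≤ 1 := by
    rw [← ENNReal.ofReal_natCast, ← ENNReal.ofReal_pow n.cast_nonneg,
      ← ENNReal.ofReal_mul (by positivity), ENNReal.ofReal_le_one, ← div_eq_mul_inv]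
    exact div_le_one_of_le₀ (by gcongr) (by positivity)
  simp only [blockDensity]
  rw [lintegral_tsum fun _ ↦ (measurable_enorm_sq_fourier_profile_smul_sub _ _).aemeasurable]
  calc _ ≤ ∑' _ : ι → Fin n, ENNReal.ofReal ((blockFreq θ P n : ℝ) ^ Fintype.card ι)⁻¹ *
          profileTail ι s (blockFreq θ P n * δ) := ENNReal.tsum_le_tsum hpacket
    _ = (n : ℝ≥0∞) ^ Fintype.card ι * ENNReal.ofReal ((blockFreq θ P n : ℝ) ^ Fintype.card ι)⁻¹ *
          profileTail ι s (blockFreq θ P n * δ) := by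
        classical simp [mul_assoc]
    _ ≤ profileTail ι s (blockFreq θ P n * δ) := mul_le_of_le_one_left' hcount

lemma tendsto_profileTail_blockFreq (s θ : ℝ) (hP : 0 < P) :
    Filter.Tendsto (fun n ↦ profileTail ι s (blockFreq θ P n * (2 / P))) Filter.atTop (nhds 0) := by
  refine (tendsto_setLIntegral_norm_gt volume (lintegral_enorm_sq_fourier_profile_ne_top s)).comp
    (Filter.tendsto_atTop_mono' _ ?_ tendsto_natCast_atTop_atTop)
  filter_upwards [Filter.eventually_gt_atTop 0] with n hn
  have hN : ((n * P : ℕ) : ℝ) ≤ blockFreq θ P n := Nat.cast_le.2 (mul_le_blockFreq hn)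
  have hP' : (0 : ℝ) < P := by exact_mod_cast hP
  push_cast at hN
  rw [← mul_div_assoc, le_div_iff₀ hP']
  linarith

end BlockDensity

section BlockMeasure

lemma lintegral_cond {X : Type*} [MeasurableSpace X] (μ : Measure X) (E : Set X) (f : X → ℝ≥0∞) :
    ∫⁻ x, f x ∂ProbabilityTheory.cond μ E = (μ E)⁻¹ * ∫⁻ x in E, f x ∂μ := by
  rw [ProbabilityTheory.cond, lintegral_smul_measure, smul_eq_mul]

variable {ι : Type*} [Fintype ι] [Nonempty ι] {s θ c : ℝ} {P n : ℕ → ℕ} {M : ℕ → ℝ}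

lemma tsum_lintegral_cond_blockSet_ne_top (hc0 : 0 < c) (hc1 : c ≤ 1) (hP0 : ∀ k, 0 < P k)
    (hP : ∀ i k, i < k → 4 * P i ≤ P k) (hn : ∀ k, 0 < n k)
    (htail : ∀ k, ENNReal.ofReal (M k) *
      profileTail ι s (blockFreq θ (P k) (n k) * (2 / P k)) ≤ ENNReal.ofReal ((1 / 2) ^ k))
    (i : ℕ) :
    ∑' k, ∫⁻ x, ENNReal.ofReal (M k) * blockDensity s θ (P k) (n k) x
      ∂ProbabilityTheory.cond volume (blockSet ι θ c (P i) (n i)) ≠ ∞ := by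
  have hinv : (volume (blockSet ι θ c (P i) (n i)))⁻¹ ≠ ∞ :=
    ENNReal.inv_ne_top.2 (volume_blockSet_ne_zero hc0 hc1 (hP0 i) (hn i))
  simp only [lintegral_cond]
  rw [ENNReal.tsum_mul_left]
  simp only [lintegral_const_mul _ measurable_blockDensity]
  refine ENNReal.mul_ne_top hinv (tsum_ne_top_of_forall_lt_le i (fun k ↦ ?_) (fun k hik ↦ ?_)
    (tsum_ofReal_half_pow.trans_ne ENNReal.ofNat_ne_top))
  · exact ENNReal.mul_ne_top ENNReal.ofReal_ne_top (ne_top_of_le_ne_top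
      (lintegral_blockDensity_ne_top (hP0 k) (hn k)) (setLIntegral_le_lintegral _ _))
  · refine le_trans ?_ (htail k)
    gcongr
    exact setLIntegral_blockDensity_le (hP0 k) (hn k) fun x hx j ↦
      lt_norm_blockCenter_sub_of_mem_blockSet hc1 (hP0 i) (hn i) (hP i k hik) hx j

theorem exists_isProbabilityMeasure_lintegral_tsum_blockDensity_eq_top (hθ0 : 0 < θ) (hθ1 : θ ≤ 1)
    (hc0 : 0 < c) (hc1 : c ≤ 1) (hιP : ∀ k, 2 * Fintype.card ι ≤ P k)
    (hP : ∀ i k, i < k → 4 * P i ≤ P k) (hn : ∀ k, 0 < n k)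
    (hlow : ∀ k, ∀ x ∈ blockSet ι θ c (P k) (n k),
      ENNReal.ofReal (2 ^ k * (10 * P k / c) ^ Fintype.card ι) ≤
        ENNReal.ofReal (M k) * blockDensity s θ (P k) (n k) x)
    (htail : ∀ k, ENNReal.ofReal (M k) *
      profileTail ι s (blockFreq θ (P k) (n k) * (2 / P k)) ≤ ENNReal.ofReal ((1 / 2) ^ k)) :
    ∃ μ : Measure (EuclideanSpace ℝ ι), IsProbabilityMeasure μ ∧
      μ (Metric.closedBall 0 1)ᶜ = 0 ∧ (∃ C, 0 < C ∧ HasGrowth μ (Fintype.card ι * θ) C) ∧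
      (∀ᵐ x ∂μ, ∑' k, ENNReal.ofReal (M k) * blockDensity s θ (P k) (n k) x < ∞) ∧
      ∫⁻ x, ∑' k, ENNReal.ofReal (M k) * blockDensity s θ (P k) (n k) x ∂μ = ∞ := by
  have hP0 (k : ℕ) : 0 < P k := (Nat.mul_pos two_pos Fintype.card_pos).trans_le (hιP k)
  have hprob (k : ℕ) : IsProbabilityMeasure
      (ProbabilityTheory.cond volume (blockSet ι θ c (P k) (n k))) :=
    ProbabilityTheory.cond_isProbabilityMeasure_of_finite
      (volume_blockSet_ne_zero hc0 hc1 (hP0 k) (hn k)) (volume_blockSet_ne_top hc1 (hP0 k) (hn k))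
  have hmem (k : ℕ) : ∀ᵐ x ∂ProbabilityTheory.cond volume (blockSet ι θ c (P k) (n k)),
      x ∈ blockSet ι θ c (P k) (n k) := ProbabilityTheory.ae_cond_mem measurableSet_blockSet
  refine exists_isProbabilityMeasure_hasGrowth_lintegral_tsum_eq_top (fun k ↦ ?_)
    (fun k ↦ hasGrowth_cond_blockSet hθ0 hθ1 hc0 hc1 (hP0 k) (hn k)) (fun k ↦ ?_)
    (fun k ↦ measurable_blockDensity.const_mul _)
    (tsum_lintegral_cond_blockSet_ne_top hc0 hc1 hP0 hP hn htail) fun k ↦ ?_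
  · have hPk : (1 : ℝ) ≤ P k := by exact_mod_cast hP0 k
    exact one_le_pow₀ ((one_le_div hc0).2 (by linarith))
  · exact (hmem k).mono fun x hx ↦ mem_closedBall_zero_iff.2
      (norm_le_one_of_mem_blockSet hc1 (hP0 k) (hιP k) (hn k) hx)
  · calc ENNReal.ofReal (2 ^ k * (10 * P k / c) ^ Fintype.card ι)
        = ∫⁻ _, ENNReal.ofReal (2 ^ k * (10 * P k / c) ^ Fintype.card ι)
            ∂ProbabilityTheory.cond volume (blockSet ι θ c (P k) (n k)) := by simp
      _ ≤ _ := lintegral_mono_ae ((hmem k).mono (hlow k))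

end BlockMeasure

section BlockWeight

open Filter Topology

/-- The coefficient which gives the wave packets of frequency `N = blockFreq θ P n` an intensity of
about `M` at their centres at the focusing time, where they have size about `N ^ (γ / 2)`. -/
noncomputable def blockWeight (θ γ M : ℝ) (P n : ℕ) : ℝ :=
  M * (2 * Real.pi * blockFreq θ P n) ^ (-γ)

variable {θ γ M : ℝ} {P n : ℕ}

lemma blockWeight_pos (hM : 0 < M) (hP : 0 < P) (hn : 0 < n) : 0 < blockWeight θ γ M P n := by
  have hN : (0 : ℝ) < blockFreq θ P n := by exact_mod_cast blockFreq_pos hP hn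
  exact mul_pos hM (Real.rpow_pos_of_pos (mul_pos Real.two_pi_pos hN) _)

lemma pow_mul_blockWeight_rpow_le (hθ : 0 < θ) (hM : 0 ≤ M) (hP : 0 < P) (hn : 0 < n) (D : ℕ)
    (β : ℝ) :
    (n : ℝ) ^ D * blockWeight θ γ M P n ^ β ≤
      M ^ β * (2 * Real.pi) ^ (-(γ * β)) * (blockFreq θ P n : ℝ) ^ (-(γ * β - θ * D)) := by
  have hN : (0 : ℝ) < blockFreq θ P n := by exact_mod_cast blockFreq_pos hP hn
  have hcount : (n : ℝ) ^ D ≤ (blockFreq θ P n : ℝ) ^ (θ * D) := by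
    rw [Real.rpow_mul_natCast hN.le]
    exact pow_le_pow_left₀ n.cast_nonneg (natCast_le_rpow_blockFreq hθ hP hn) D
  have hweight : blockWeight θ γ M P n ^ β =
      M ^ β * (2 * Real.pi) ^ (-(γ * β)) * (blockFreq θ P n : ℝ) ^ (-(γ * β)) := by
    have hR : 0 ≤ 2 * Real.pi * blockFreq θ P n := (mul_pos Real.two_pi_pos hN).le
    rw [blockWeight, Real.mul_rpow hM (Real.rpow_nonneg hR _), ← Real.rpow_mul hR, neg_mul,
      Real.mul_rpow Real.two_pi_pos.le hN.le, mul_assoc]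
  calc (n : ℝ) ^ D * blockWeight θ γ M P n ^ β
      ≤ (blockFreq θ P n : ℝ) ^ (θ * D) *
          (M ^ β * (2 * Real.pi) ^ (-(γ * β)) * (blockFreq θ P n : ℝ) ^ (-(γ * β))) := by
        rw [hweight]
        gcongr
    _ = _ := by
        rw [neg_sub, sub_eq_add_neg, Real.rpow_add hN]
        ring

lemma tendsto_blockFreq_atTop (θ : ℝ) (hP : 0 < P) :
    Tendsto (fun n ↦ (blockFreq θ P n : ℝ)) atTop atTop :=
  tendsto_natCast_atTop_atTop.comp <| tendsto_atTop_mono' _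
    ((eventually_gt_atTop 0).mono fun n hn ↦
      (Nat.le_mul_of_pos_right n hP).trans (mul_le_blockFreq hn)) tendsto_id

lemma tendsto_pow_mul_blockWeight_rpow (hθ : 0 < θ) (hM : 0 ≤ M) (hP : 0 < P) {D : ℕ} {β : ℝ}
    (hγ : θ * D < γ * β) :
    Tendsto (fun n : ℕ ↦ (n : ℝ) ^ D * blockWeight θ γ M P n ^ β) atTop (𝓝 0) := by
  have hlim := ((tendsto_rpow_neg_atTop (sub_pos.2 hγ)).comp
    (tendsto_blockFreq_atTop θ hP)).const_mul (M ^ β * (2 * Real.pi) ^ (-(γ * β)))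
  rw [mul_zero] at hlim
  refine squeeze_zero' (.of_forall fun n ↦ ?_) ?_ hlim
  · unfold blockWeight
    positivity
  · exact (eventually_gt_atTop 0).mono fun n hn ↦ pow_mul_blockWeight_rpow_le hθ hM hP hn D β

lemma tsum_sigma_ofReal_rpow_ne_top {ι : Type*} [Fintype ι] {n : ℕ → ℕ} {w : ℕ → ℝ} {β : ℝ}
    (hw : ∀ k, 0 ≤ w k) (hβ : 0 ≤ β)
    (hsum : ∀ k, (n k : ℝ) ^ Fintype.card ι * w k ^ β ≤ (1 / 2) ^ k) :
    ∑' a : Σ k, (ι → Fin (n k)), ENNReal.ofReal (w a.1) ^ β ≠ ∞ := by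
  classical
  rw [ENNReal.tsum_sigma fun k (_ : ι → Fin (n k)) ↦ ENNReal.ofReal (w k) ^ β]
  refine ne_top_of_le_ne_top (tsum_ofReal_half_pow.trans_ne ENNReal.ofNat_ne_top)
    (ENNReal.tsum_le_tsum fun k ↦ ?_)
  calc ∑' _ : ι → Fin (n k), ENNReal.ofReal (w k) ^ β
      = ENNReal.ofReal ((n k : ℝ) ^ Fintype.card ι * w k ^ β) := by
        rw [ENNReal.ofReal_mul (by positivity), ENNReal.ofReal_rpow_of_nonneg (hw k) hβ]
        simp [ENNReal.ofReal_pow]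
    _ ≤ ENNReal.ofReal ((1 / 2) ^ k) := ENNReal.ofReal_le_ofReal (hsum k)

lemma exists_strictMono_profileTail_le_and_pow_mul_blockWeight_rpow_le {ι : Type*} [Fintype ι]
    [Nonempty ι] (s : ℝ) {P : ℕ → ℕ} {M : ℕ → ℝ} {β : ℝ} (hθ : 0 < θ) (hM : ∀ k, 0 ≤ M k)
    (hP : ∀ k, 0 < P k) (hγ : θ * Fintype.card ι < γ * β) :
    ∃ n : ℕ → ℕ, StrictMono n ∧ ∀ k, 0 < n k ∧
      ENNReal.ofReal (M k) * profileTail ι s (blockFreq θ (P k) (n k) * (2 / P k)) ≤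
        ENNReal.ofReal ((1 / 2) ^ k) ∧
      (n k : ℝ) ^ Fintype.card ι * blockWeight θ γ (M k) (P k) (n k) ^ β ≤ (1 / 2) ^ k := by
  refine extraction_forall_of_eventually (P := fun k n ↦ 0 < n ∧
    ENNReal.ofReal (M k) * profileTail ι s (blockFreq θ (P k) n * (2 / P k)) ≤
      ENNReal.ofReal ((1 / 2) ^ k) ∧
    (n : ℝ) ^ Fintype.card ι * blockWeight θ γ (M k) (P k) n ^ β ≤ (1 / 2) ^ k) fun k ↦ ?_
  have htail : Tendsto (fun n ↦ ENNReal.ofReal (M k) *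
      profileTail ι s (blockFreq θ (P k) n * (2 / P k))) atTop (𝓝 0) := by
    simpa using ENNReal.Tendsto.const_mul (tendsto_profileTail_blockFreq s θ (hP k))
      (.inr ENNReal.ofReal_ne_top)
  filter_upwards [eventually_gt_atTop 0,
    htail.eventually_le_const (ENNReal.ofReal_pos.2 (by positivity : (0 : ℝ) < (1 / 2) ^ k)),
    (tendsto_pow_mul_blockWeight_rpow hθ (hM k) (hP k) hγ).eventually_le_const
      (by positivity : (0 : ℝ) < (1 / 2) ^ k)] with n hn htail hweight
  exact ⟨hn, htail, hweight⟩

end BlockWeight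

section Counterexample

theorem exists_blocks {ι : Type*} [Fintype ι] [Nonempty ι] (s : ℝ) {θ γ β : ℝ} (hθ0 : 0 < θ)
    (hθ1 : θ ≤ 1) (hγ : θ * Fintype.card ι < γ * β) :
    ∃ (P n : ℕ → ℕ) (M : ℕ → ℝ), (∀ i k, i < k → 4 * P i ≤ P k) ∧ StrictMono n ∧
      (∀ k, 0 < P k ∧ 0 < n k ∧ 0 < M k) ∧
      (∀ k, (n k : ℝ) ^ Fintype.card ι * blockWeight θ γ (M k) (P k) (n k) ^ β ≤ (1 / 2) ^ k) ∧
      ∃ μ : Measure (EuclideanSpace ℝ ι), IsProbabilityMeasure μ ∧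
        μ (Metric.closedBall 0 1)ᶜ = 0 ∧ (∃ C, 0 < C ∧ HasGrowth μ (Fintype.card ι * θ) C) ∧
        (∀ᵐ x ∂μ, ∑' k, ENNReal.ofReal (M k) * blockDensity s θ (P k) (n k) x < ∞) ∧
        ∫⁻ x, ∑' k, ENNReal.ofReal (M k) * blockDensity s θ (P k) (n k) x ∂μ = ∞ := by
  obtain ⟨δ, hδ, b, hb, hprofile⟩ := exists_le_enorm_sq_fourier_profile (ι := ι) s
  have hι : (0 : ℝ) < Fintype.card ι := by exact_mod_cast Fintype.card_pos
  set c := min 1 (δ / Fintype.card ι)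
  have hc0 : 0 < c := lt_min one_pos (by positivity)
  have hcδ : Fintype.card ι * c ≤ δ :=
    (mul_le_mul_of_nonneg_left (min_le_right _ _) hι.le).trans_eq (mul_div_cancel₀ δ hι.ne')
  set P : ℕ → ℕ := fun k ↦ Fintype.card ι * 4 ^ (k + 1)
  have hP0 (k : ℕ) : 0 < P k := Nat.mul_pos Fintype.card_pos (by positivity)
  have hP (i k : ℕ) (hik : i < k) : 4 * P i ≤ P k := by
    calc 4 * P i = Fintype.card ι * 4 ^ (i + 2) := by ring
      _ ≤ P k := Nat.mul_le_mul_left _ (Nat.pow_le_pow_right (by norm_num) (by omega))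
  have hιP (k : ℕ) : 2 * Fintype.card ι ≤ P k := by
    rw [mul_comm]
    exact Nat.mul_le_mul_left _ (by rw [pow_succ]; have := Nat.one_le_pow k 4 four_pos; omega)
  set M : ℕ → ℝ := fun k ↦ 2 ^ k * (10 * P k / c) ^ Fintype.card ι / b
  have hM (k : ℕ) : 0 < M k := by
    have : (0 : ℝ) < P k := by exact_mod_cast hP0 k
    positivity
  obtain ⟨n, hnmono, hn⟩ :=
    exists_strictMono_profileTail_le_and_pow_mul_blockWeight_rpow_le s hθ0 (fun k ↦ (hM k).le)
      hP0 hγ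
  refine ⟨P, n, M, hP, hnmono, fun k ↦ ⟨hP0 k, (hn k).1, hM k⟩, fun k ↦ (hn k).2.2,
    exists_isProbabilityMeasure_lintegral_tsum_blockDensity_eq_top hθ0 hθ1 hc0 (min_le_left _ _)
      hιP hP (fun k ↦ (hn k).1) (fun k x hx ↦ ?_) fun k ↦ (hn k).2.1⟩
  calc ENNReal.ofReal (2 ^ k * (10 * P k / c) ^ Fintype.card ι)
      = ENNReal.ofReal (M k) * ENNReal.ofReal b := by
        rw [← ENNReal.ofReal_mul (hM k).le, div_mul_cancel₀ _ hb.ne']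
    _ ≤ ENNReal.ofReal (M k) * blockDensity s θ (P k) (n k) x := by
        gcongr
        exact ofReal_le_blockDensity_of_mem_blockSet (fun y hy ↦ hprofile y (hy.trans hcδ)) hc0.le
          (hP0 k) (hn k).1 hx

/-- The wave packets of all the blocks, focusing at time `t₀`; the `k`-th block has parameters `P k`
and `n k`. -/
noncomputable def blockPacket {ι : Type*} [Fintype ι] (m s t₀ θ : ℝ) (P n : ℕ → ℕ)
    (a : Σ k, (ι → Fin (n k))) : EuclideanSpace ℝ ι → ℂ :=
  wavePacket m s t₀ (blockFreq θ (P a.1) (n a.1)) (blockCenter (P a.1) (n a.1) a.2)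

lemma sobolevInner_blockPacket {ι : Type*} [Fintype ι] [Nonempty ι] (m s t₀ : ℝ) {θ : ℝ}
    {P n : ℕ → ℕ} (hθ0 : 0 < θ) (hθ1 : θ ≤ 1) (hP0 : ∀ k, 0 < P k)
    (hP : ∀ i k, i < k → 2 * P i ≤ P k) (hn0 : ∀ k, 0 < n k) (hn : Monotone n)
    (a b : Σ k, (ι → Fin (n k))) [Decidable (a = b)] :
    sobolevInner s (blockPacket m s t₀ θ P n a) (blockPacket m s t₀ θ P n b) =
      if a = b then 1 else 0 := by
  have hN (k : ℕ) : (0 : ℝ) < blockFreq θ (P k) (n k) := by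
    exact_mod_cast blockFreq_pos (hP0 k) (hn0 k)
  have hdouble {i k : ℕ} (hik : i < k) :
      (2 * blockFreq θ (P i) (n i) : ℝ) ≤ blockFreq θ (P k) (n k) := by
    exact_mod_cast mul_blockFreq_le_blockFreq hθ0 hθ1 (hP i k hik) (hn hik.le)
  split_ifs with hab
  · rw [hab]
    exact sobolevInner_wavePacket_self m s t₀ (hN _) _
  obtain ⟨k, j⟩ := a
  obtain ⟨k', j'⟩ := b
  rcases eq_or_ne k k' with rfl | hk
  · have hj : j ≠ j' := fun h ↦ hab (congrArg _ h)
    exact sobolevInner_wavePacket_eq_zero m s t₀ (hN k) ((blockCenter_injective (hP0 k)).ne hj)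
      (exists_int_blockFreq_mul_blockCenter_sub (hP0 k) j j')
  · exact sobolevInner_wavePacket_eq_zero_of_two_mul_le m s t₀
      (hk.lt_or_gt.imp (fun h ↦ hdouble h) fun h ↦ hdouble h) _ _

open FourierTransform in
lemma ofReal_blockWeight_mul_norm_sq_fracEvol {d : ℕ} (m s t₀ θ : ℝ) {P n : ℕ → ℕ} {M : ℝ}
    (hM : 0 ≤ M) (hP0 : ∀ k, 0 < P k) (hn0 : ∀ k, 0 < n k) (a : Σ k, (Fin d → Fin (n k)))
    (x : EuclideanSpace ℝ (Fin d)) :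
    ENNReal.ofReal (blockWeight θ (d - 2 * s) M (P a.1) (n a.1) *
        ‖fracEvol d m (blockPacket m s t₀ θ P n a) t₀ x‖ ^ 2) =
      ENNReal.ofReal M * ‖𝓕 (profile (Fin d) s)
        ((blockFreq θ (P a.1) (n a.1) : ℝ) • (blockCenter (P a.1) (n a.1) a.2 - x))‖ₑ ^ 2 := by
  have hN : (0 : ℝ) < blockFreq θ (P a.1) (n a.1) := by
    exact_mod_cast blockFreq_pos (hP0 a.1) (hn0 a.1)
  rw [blockPacket, norm_sq_fracEvol_wavePacket m s t₀ hN, blockWeight, mul_assoc, ← mul_assoc _ _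
    (_ ^ 2), ← Real.rpow_add (mul_pos Real.two_pi_pos hN), neg_add_cancel, Real.rpow_zero, one_mul,
    ENNReal.ofReal_mul hM, ENNReal.ofReal_pow (norm_nonneg _), ofReal_norm]

lemma tsum_ofReal_blockWeight_mul_norm_sq_fracEvol {d : ℕ} (m s t₀ θ : ℝ) {P n : ℕ → ℕ} {M : ℕ → ℝ}
    (hM : ∀ k, 0 ≤ M k) (hP0 : ∀ k, 0 < P k) (hn0 : ∀ k, 0 < n k) {J : Type*}
    (e : J ≃ Σ k, (Fin d → Fin (n k))) (x : EuclideanSpace ℝ (Fin d)) :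
    ∑' j, ENNReal.ofReal (blockWeight θ (d - 2 * s) (M (e j).1) (P (e j).1) (n (e j).1) *
        ‖fracEvol d m (blockPacket m s t₀ θ P n (e j)) t₀ x‖ ^ 2) =
      ∑' k, ENNReal.ofReal (M k) * blockDensity s θ (P k) (n k) x := by
  rw [e.tsum_eq fun a ↦ ENNReal.ofReal (blockWeight θ (d - 2 * s) (M a.1) (P a.1) (n a.1) *
    ‖fracEvol d m (blockPacket m s t₀ θ P n a) t₀ x‖ ^ 2), ENNReal.tsum_sigma']
  refine tsum_congr fun k ↦ ?_
  rw [blockDensity, ← ENNReal.tsum_mul_left]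
  exact tsum_congr fun j ↦
    ofReal_blockWeight_mul_norm_sq_fracEvol m s t₀ θ (hM k) hP0 hn0 ⟨k, j⟩ x

-- Finiteness a.e. is essential: a real-valued `∑'` takes the value `0` on a divergent series.
lemma lintegral_ofReal_tsum_eq_top {X J : Type*} [MeasurableSpace X] {μ : Measure X}
    {f : J → X → ℝ} (hf : ∀ j x, 0 ≤ f j x)
    (hfin : ∀ᵐ x ∂μ, ∑' j, ENNReal.ofReal (f j x) < ∞)
    (hint : ∫⁻ x, ∑' j, ENNReal.ofReal (f j x) ∂μ = ∞) :
    ∫⁻ x, ENNReal.ofReal (∑' j, f j x) ∂μ = ∞ := by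
  rw [← hint]
  refine lintegral_congr_ae (hfin.mono fun x hx ↦ ENNReal.ofReal_tsum_of_nonneg (hf · x) ?_)
  simpa only [ENNReal.toReal_ofReal (hf _ x)] using ENNReal.summable_toReal hx.ne

theorem statement14_general (d : ℕ) (m : ℝ) (α : ℝ) (hα0 : 0 < α) (hαd : α ≤ d) (s : ℝ) (β : ℝ)
    (hβ : 0 < β) (hnec : α / β < d - 2 * s) (t₀ : ℝ) :
    ∃ (μ : Measure (EuclideanSpace ℝ (Fin d))), IsProbabilityMeasure μ ∧
      μ (Metric.closedBall (0 : EuclideanSpace ℝ (Fin d)) 1)ᶜ = 0 ∧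
      (∃ A : ℝ, 0 < A ∧ HasGrowth μ α A) ∧
      ∃ g : ℕ → EuclideanSpace ℝ (Fin d) → ℂ,
        (∀ i j, sobolevInner s (g i) (g j) = if i = j then 1 else 0) ∧
        ∃ lam : ℕ → ℝ, (∀ j, 0 ≤ lam j) ∧
          (∑' j, ENNReal.ofReal (lam j) ^ β) < ∞ ∧
          0 < (∑' j, ENNReal.ofReal (lam j) ^ β) ∧
          ∫⁻ x, ENNReal.ofReal (∑' j, lam j * ‖fracEvol d m (g j) t₀ x‖ ^ 2) ∂μ = ∞ := by
  have hd : (0 : ℝ) < d := hα0.trans_le hαd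
  have : NeZero d := ⟨by exact_mod_cast hd.ne'⟩
  have hθ0 : 0 < α / d := by positivity
  have hθ1 : α / d ≤ 1 := div_le_one_of_le₀ hαd hd.le
  have hθd : d * (α / d) = α := mul_div_cancel₀ α hd.ne'
  have hγ : α / d * Fintype.card (Fin d) < (d - 2 * s) * β := by
    rwa [Fintype.card_fin, mul_comm, hθd, ← div_lt_iff₀ hβ]
  obtain ⟨P, n, M, hP, hn, hpos, hweight, μ, hμ, hball, hgrowth, hfin, hint⟩ :=
    exists_blocks s hθ0 hθ1 hγ
  choose hP0 hn0 hM0 using hpos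
  rw [Fintype.card_fin, hθd] at hgrowth
  have (k : ℕ) : NeZero (n k) := ⟨(hn0 k).ne'⟩
  obtain ⟨_⟩ := nonempty_denumerable (Σ k, (Fin d → Fin (n k)))
  let e := (Denumerable.eqv (Σ k, (Fin d → Fin (n k)))).symm
  set w : ℕ → ℝ := fun k ↦ blockWeight (α / d) (d - 2 * s) (M k) (P k) (n k)
  have hw (k : ℕ) : 0 < w k := blockWeight_pos (hM0 k) (hP0 k) (hn0 k)
  have hsum := tsum_ofReal_blockWeight_mul_norm_sq_fracEvol m s t₀ (α / d) (fun k ↦ (hM0 k).le)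
    hP0 hn0 e
  refine ⟨μ, hμ, hball, hgrowth, fun i ↦ blockPacket m s t₀ (α / d) P n (e i), fun i j ↦ ?_,
    fun i ↦ w (e i).1, fun i ↦ (hw _).le, ?_, ?_, ?_⟩
  · simpa only [e.injective.eq_iff] using sobolevInner_blockPacket m s t₀ hθ0 hθ1 hP0
      (fun i k hik ↦ le_trans (by omega) (hP i k hik)) hn0 hn.monotone (e i) (e j)
  · rw [e.tsum_eq fun a ↦ ENNReal.ofReal (w a.1) ^ β]
    exact (tsum_sigma_ofReal_rpow_ne_top (fun k ↦ (hw k).le) hβ.le hweight).lt_top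
  · exact (ENNReal.rpow_pos (ENNReal.ofReal_pos.2 (hw _)) ENNReal.ofReal_ne_top).trans_le
      (ENNReal.le_tsum 0)
  · exact lintegral_ofReal_tsum_eq_top (fun i x ↦ mul_nonneg (hw _).le (sq_nonneg _))
      (by simpa only [w, hsum] using hfin) (by simpa only [w, hsum] using hint)

end Counterexample

/-- Let `d ≥ 1`, `m ∈ (0,∞) \ {1}`, `0 < α ≤ d`, `0 ≤ s < d/2`, `β ≥ 1`
with `d - 2s > α/β`.  Then there exist an `α`-dimensional probability measure `μ` supported
in the unit ball, an orthonormal system `(f_j)` in `Ḣ^s(ℝ^d)` (parametrized on the Fourier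
side by `g_j = f̂_j`), and a nonnegative sequence `λ ∈ ℓ^β` for which the maximal estimate
`‖∑_j λ_j |e^{it(-Δ)^{m/2}}f_j|²‖_{L¹_x(dμ)L^∞_t(0,1)} ≲ ‖λ‖_{ℓ^β}` fails (the left-hand
side is infinite while the right-hand side is finite and nonzero).  Equivalently,
`d - 2s ≤ α/β` is necessary for the maximal estimate. -/
theorem statement14 (d : ℕ) (hd : 1 ≤ d) (m : ℝ) (hm0 : 0 < m) (hm1 : m ≠ 1)
    (α : ℝ) (hα0 : 0 < α) (hαd : α ≤ d) (s : ℝ) (hs0 : 0 ≤ s) (hs : s < d / 2)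
    (β : ℝ) (hβ : 1 ≤ β) (hnec : α / β < d - 2 * s) :
    ∃ (μ : Measure (EuclideanSpace ℝ (Fin d))), IsProbabilityMeasure μ ∧
      μ (Metric.closedBall (0 : EuclideanSpace ℝ (Fin d)) 1)ᶜ = 0 ∧
      (∃ A : ℝ, 0 < A ∧ ∀ (x : EuclideanSpace ℝ (Fin d)) (r : ℝ), 0 < r →
        μ (Metric.ball x r) ≤ ENNReal.ofReal (A * r ^ α)) ∧
      ∃ (g : ℕ → EuclideanSpace ℝ (Fin d) → ℂ),
        -- orthonormality of the data in `Ḣ^s`, on the Fourier side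
        (∀ i j, ∫ ξ, ((‖ξ‖ ^ (2 * s) : ℝ) : ℂ) * (g i ξ * (starRingEnd ℂ) (g j ξ)) =
            if i = j then 1 else 0) ∧
        ∃ lam : ℕ → ℝ, (∀ j, 0 ≤ lam j) ∧
          (∑' j, ENNReal.ofReal (lam j) ^ β) < ∞ ∧
          0 < (∑' j, ENNReal.ofReal (lam j) ^ β) ∧
          ∫⁻ x, (⨆ t : Set.Ioo (0 : ℝ) 1,
              ENNReal.ofReal (∑' j, lam j * ‖fracEvol d m (g j) t x‖ ^ 2)) ∂μ = ∞ := by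
  obtain ⟨μ, hμ, hball, hgrowth, g, horth, lam, hlam, hfin, hpos, hint⟩ :=
    statement14_general d m α hα0 hαd s β (one_pos.trans_le hβ) hnec (1 / 2)
  refine ⟨μ, hμ, hball, hgrowth, g, horth, lam, hlam, hfin, hpos, eq_top_iff.2 ?_⟩
  rw [← hint]
  exact lintegral_mono fun x ↦ le_iSup (fun t : Set.Ioo (0 : ℝ) 1 ↦
    ENNReal.ofReal (∑' j, lam j * ‖fracEvol d m (g j) t x‖ ^ 2)) ⟨1 / 2, by norm_num⟩
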